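/- Let {f_t}_{t∈[0,1]} be a family of germs of C^∞ functions (ℝ^n,0) → (ℝ,0) that is R-C^1 trivial, and suppose that f_0 has finite order and its initial part in(f_0) has an algebraically isolated singularity at the origin, i.e. μ(in(f_0)) < +∞. Then μ(f_t) = μ(f_0) for all t ∈ [0,1]. -/

import Mathlib

open Filter Set Metric Topology Asymptotics

noncomputable section

set_option synthInstance.maxHeartbeats 1000000

/-- `ℝ^n` with the Euclidean structure. -/
abbrev Eucl (n : ℕ) : Type := EuclideanSpace ℝ (Fin n)

variable {V W : Type*} [NormedAddCommGroup V] [NormedSpace ℝ V]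
  [NormedAddCommGroup W] [NormedSpace ℝ W]

/-- `F` admits the `α`-derivative `H` at `x`:  `H` is continuous and for every direction `v`,
`F (x + t v) - F x = t ^ α • H v + o(t ^ α)` as `t → 0⁺`. -/
def HasAlphaDerivAt (F : V → W) (x : V) (α : ℝ) (H : V → W) : Prop :=
  Continuous H ∧ ∀ v : V,
    Tendsto (fun t : ℝ => (t ^ α)⁻¹ • (F (x + t • v) - F x - t ^ α • H v))
      (𝓝[>] (0 : ℝ)) (𝓝 0)

/-- `F` has order `α` at `x`: for every nonzero direction `v` the limit of
`F (x + t v) / t ^ α` as `t → 0⁺` exists, and for at least one `v` it is nonzero. -/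
def HasOrderAt (F : V → W) (x : V) (α : ℝ) : Prop :=
  (∀ v : V, v ≠ 0 → ∃ L : W,
      Tendsto (fun t : ℝ => (t ^ α)⁻¹ • F (x + t • v)) (𝓝[>] (0 : ℝ)) (𝓝 L)) ∧
  ∃ v : V, v ≠ 0 ∧ ∃ L : W, L ≠ 0 ∧
      Tendsto (fun t : ℝ => (t ^ α)⁻¹ • F (x + t • v)) (𝓝[>] (0 : ℝ)) (𝓝 L)

/-- `φ` is a lipeomorphism from `U` onto `V'`. -/
def IsLipeoOn (φ : V → W) (U : Set V) (V' : Set W) : Prop :=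
  Set.BijOn φ U V' ∧ ∃ c : ℝ, 1 ≤ c ∧ ∀ x ∈ U, ∀ y ∈ U,
    (1 / c) * ‖x - y‖ ≤ ‖φ x - φ y‖ ∧ ‖φ x - φ y‖ ≤ c * ‖x - y‖

/-- `d` is a pseudo-Lipschitz derivative of `φ` at `x`: along some sequence `t_j → 0⁺`,
`(φ (x + t_j v) - φ x) / t_j → d v` uniformly on compact sets. -/
def IsPseudoLipDerivAt (φ : V → V) (x : V) (d : V → V) : Prop :=
  ∃ t : ℕ → ℝ, (∀ j, 0 < t j) ∧ Tendsto t atTop (𝓝 (0 : ℝ)) ∧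
    ∀ K : Set V, IsCompact K →
      TendstoUniformlyOn (fun j v => (t j)⁻¹ • (φ (x + t j • v) - φ x)) d atTop K

/-- `F ∼ G` at `x₀`: asymptotic equivalence of `F` and `G` at `x₀`. -/
def AsympEquivAt (F G : V → W) (x₀ : V) : Prop :=
  ∃ c₁ c₂ : ℝ, 0 < c₁ ∧ 0 < c₂ ∧
    ∀ᶠ x in 𝓝 x₀, c₂ * ‖F x‖ ≤ ‖G x‖ ∧ ‖G x‖ ≤ c₁ * ‖F x‖

/-- `F ≈ G` at `x₀` via the lipeomorphism `φ`. -/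
def AsympLipEquivAtVia {V' : Type*} [NormedAddCommGroup V'] [NormedSpace ℝ V']
    (F : V → W) (G : V' → W) (φ : V → V') (x₀ : V) : Prop :=
  ∃ c : ℝ, 1 ≤ c ∧ ∀ᶠ x in 𝓝 x₀,
    (1 / c) * ‖F x - F x₀‖ ≤ ‖G (φ x) - G (φ x₀)‖ ∧
      ‖G (φ x) - G (φ x₀)‖ ≤ c * ‖F x - F x₀‖

/-- The degree-`m` term of the Taylor series of `F` at `0`; for a `C^∞` germ of
finite order `m` this is its initial part `in(F)`. -/
def inPart (F : V → ℝ) (m : ℕ) : V → ℝ :=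
  fun x => (m.factorial : ℝ)⁻¹ • iteratedFDeriv ℝ m F 0 (fun _ => x)

instance {α : Type*} (l : Filter α) {R : Type*} [CommSemiring R] :
    Algebra R (Filter.Germ l R) :=
  Algebra.ofModule
    (fun r x y => Filter.Germ.inductionOn₂ x y fun f g => by
      rw [← Filter.Germ.coe_smul, ← Filter.Germ.coe_mul, ← Filter.Germ.coe_mul,
        ← Filter.Germ.coe_smul, smul_mul_assoc])
    (fun r x y => Filter.Germ.inductionOn₂ x y fun f g => by
      rw [← Filter.Germ.coe_smul, ← Filter.Germ.coe_mul, ← Filter.Germ.coe_mul,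
        ← Filter.Germ.coe_smul, mul_smul_comm])

/-- `E_n`: the ℝ-algebra of germs at `0` of `C^∞` functions `ℝ^n → ℝ`, realized as a
subalgebra of the algebra of germs at `0` of functions `ℝ^n → ℝ`. -/
def smoothGerms (n : ℕ) : Subalgebra ℝ (Filter.Germ (𝓝 (0 : Eucl n)) ℝ) where
  carrier := {γ | ∃ f : Eucl n → ℝ, ContDiff ℝ (⊤ : ℕ∞) f ∧ γ = ↑f}
  add_mem' := by
    rintro a b ⟨f, hf, rfl⟩ ⟨g, hg, rfl⟩
    exact ⟨f + g, hf.add hg, rfl⟩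
  mul_mem' := by
    rintro a b ⟨f, hf, rfl⟩ ⟨g, hg, rfl⟩
    exact ⟨f * g, hf.mul hg, rfl⟩
  algebraMap_mem' := fun r => ⟨fun _ => r, contDiff_const, by
    rw [Algebra.algebraMap_eq_smul_one, ← Filter.Germ.coe_one, ← Filter.Germ.coe_smul]
    congr 1
    funext x
    simp⟩

/-- The Jacobian ideal `J(f) ⊆ E_n`, generated by the germs at `0` of the partial
derivatives `∂f/∂x_1, …, ∂f/∂x_n`. -/
def jacobianIdeal (n : ℕ) (f : Eucl n → ℝ) : Ideal (smoothGerms n) :=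
  Ideal.span {γ | ∃ i : Fin n,
    (γ : Filter.Germ (𝓝 (0 : Eucl n)) ℝ) =
      ↑(fun x => fderiv ℝ f x (EuclideanSpace.single i 1))}

/-- The real Milnor number `μ(f) = dim_ℝ E_n / J(f)`, as a cardinal. -/
def milnor (n : ℕ) (f : Eucl n → ℝ) : Cardinal :=
  Module.rank ℝ (smoothGerms n ⧸ jacobianIdeal n f)

/-- `φ` is a germ at `0` of a `C^k` diffeomorphism `(ℝ^n, 0) → (ℝ^n, 0)`. -/
def IsCkDiffeoGermAt {n : ℕ} (k : ℕ∞) (φ : Eucl n → Eucl n) : Prop :=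
  φ 0 = 0 ∧ ∃ U V : Set (Eucl n), IsOpen U ∧ IsOpen V ∧ 0 ∈ U ∧ 0 ∈ V ∧
    Set.BijOn φ U V ∧ ContDiffOn ℝ k φ U ∧ ∃ ψ : Eucl n → Eucl n,
      ContDiffOn ℝ k ψ V ∧ (∀ x ∈ U, ψ (φ x) = x) ∧ ∀ y ∈ V, φ (ψ y) = y

section DepthTheory

variable {R : Type} [CommRing R]

/-- `a` is a nonzerodivisor modulo `I`. -/
def NzdMod (I : Ideal R) (a : R) : Prop := ∀ u, a * u ∈ I → u ∈ I

/-- `M` annihilates a nonzero element modulo `I`. -/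
def SocMod (M I : Ideal R) : Prop := ∃ u, u ∉ I ∧ ∀ a ∈ M, a * u ∈ I

/-- regular sequences modulo `I`; the list is in reverse order. -/
def RegL (I : Ideal R) : List R → Prop
  | [] => True
  | a :: l => RegL I l ∧ NzdMod (I ⊔ Ideal.ofList l) a

theorem not_soc_of_nzd {M I : Ideal R} {a : R} (ha : a ∈ M) (h : NzdMod I a) : ¬ SocMod M I := by
  rintro ⟨u, hu, hM⟩
  exact hu (h u (hM a ha))

theorem soc_exchange {M I : Ideal R} {x y : R} (hx : NzdMod I x) (hy : NzdMod I y)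
    (hyM : y ∈ M) (h : SocMod M (I ⊔ Ideal.span {x})) : SocMod M (I ⊔ Ideal.span {y}) := by
  obtain ⟨u, hu, hM⟩ := h
  simp only [Submodule.mem_sup, Ideal.mem_span_singleton'] at hM hu
  obtain ⟨i, hi, _, ⟨v, rfl⟩, hv⟩ := hM y hyM
  refine ⟨v, ?_, ?_⟩
  · simp only [Submodule.mem_sup, Ideal.mem_span_singleton']
    rintro ⟨j, hj, _, ⟨v', rfl⟩, hv'⟩
    apply hu
    have h1 : y * (u - v' * x) ∈ I := by
      have : y * (u - v' * x) = i + x * j := by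
        rw [← hv'] at hv; linear_combination -hv
      rw [this]; exact I.add_mem hi (I.mul_mem_left _ hj)
    exact ⟨_, hy _ h1, v' * x, ⟨v', rfl⟩, by ring⟩
  · intro a ha
    obtain ⟨j, hj, _, ⟨w, rfl⟩, hw⟩ := hM a ha
    simp only [Submodule.mem_sup, Ideal.mem_span_singleton']
    have h1 : x * (a * v - w * y) ∈ I := by
      have : x * (a * v - w * y) = y * j - a * i := by
        linear_combination a * hv - y * hw
      rw [this]; exact I.sub_mem (I.mul_mem_left _ hj) (I.mul_mem_left _ hi)
    exact ⟨_, hx _ h1, w * y, ⟨w, rfl⟩, by ring⟩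

theorem soc_tails {M I : Ideal R} (l : List R) (hl : ∀ x ∈ l, x ∈ M) (h : RegL I l) :
    ∀ a ∈ M, NzdMod (I ⊔ Ideal.ofList l) a → ∀ s ∈ l.tails, ¬ SocMod M (I ⊔ Ideal.ofList s) := by
  induction l with
  | nil =>
    intro a ha h1 s hs
    simp at hs
    subst hs
    exact not_soc_of_nzd ha h1
  | cons b l ih =>
    intro a ha h1 s hs
    rw [List.tails_cons, List.mem_cons] at hs
    rcases hs with rfl | hs
    · exact not_soc_of_nzd ha h1
    · exact ih (fun x hx => hl x (List.mem_cons_of_mem _ hx)) h.1 b (hl b List.mem_cons_self) h.2 s hs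

theorem regL_front {I : Ideal R} {c : R} (l : List R) (h : RegL I l)
    (hc : ∀ s ∈ l.tails, NzdMod (I ⊔ Ideal.ofList s) c) : RegL (I ⊔ Ideal.span {c}) l := by
  induction l with
  | nil => trivial
  | cons b l ih =>
    refine ⟨ih h.1 (fun s hs => hc s (by rw [List.tails_cons]; exact List.mem_cons_of_mem _ hs)), ?_⟩
    have h1 : NzdMod (I ⊔ Ideal.ofList (b :: l)) c := hc _ (by simp)
    intro u hu
    rw [sup_right_comm] at hu ⊢
    rw [Ideal.ofList_cons, sup_comm (Ideal.span {b}), ← sup_assoc] at h1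
    have h2 := h.2
    set J := I ⊔ Ideal.ofList l
    simp only [Submodule.mem_sup, Ideal.mem_span_singleton'] at hu ⊢
    obtain ⟨j, hj, _, ⟨v, rfl⟩, hv⟩ := hu
    have h3 : v ∈ J ⊔ Ideal.span {b} := by
      apply h1
      simp only [Submodule.mem_sup, Ideal.mem_span_singleton']
      exact ⟨-j, J.neg_mem hj, u * b, ⟨u, rfl⟩, by linear_combination -hv⟩
    simp only [Submodule.mem_sup, Ideal.mem_span_singleton'] at h3
    obtain ⟨k, hk, _, ⟨w, rfl⟩, rfl⟩ := h3
    refine ⟨u - w * c, ?_, w * c, ⟨w, rfl⟩, by ring⟩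
    apply h2
    have : b * (u - w * c) = j + c * k := by linear_combination -hv
    rw [this]
    exact J.add_mem hj (J.mul_mem_left _ hk)

theorem exists_nzd [IsNoetherianRing R] [Algebra ℝ R] {M : Ideal R} [hM : M.IsMaximal]
    {W : Type} [AddCommGroup W] [Module ℝ W] (L : W →ₗ[ℝ] R) (k : ℕ)
    (hL : M ^ k ≤ Ideal.span (Set.range L)) (Is : List (Ideal R)) (hIs : ∀ I ∈ Is, ¬ SocMod M I) :
    ∃ c, ∀ I ∈ Is, NzdMod I (L c) := by
  classical
  have hfin : (⋃ I ∈ {I | I ∈ Is}, associatedPrimes R (R ⧸ I)).Finite :=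
    Set.Finite.biUnion Is.finite_toSet (fun I _ => associatedPrimes.finite R (R ⧸ I))
  set P := hfin.toFinset with hP
  let s : Finset (Subspace ℝ W) := P.image (fun p => (p.restrictScalars ℝ).comap L)
  have hs : ⊤ ∉ s := by
    intro htop
    obtain ⟨p, hp, hpt⟩ := Finset.mem_image.1 htop
    rw [hP, Set.Finite.mem_toFinset] at hp
    simp only [Set.mem_iUnion, exists_prop, Set.mem_ofPred_eq] at hp
    obtain ⟨I, hI, hpI⟩ := hp
    obtain ⟨hprime, x, hx⟩ := isAssociatedPrime_iff.1 hpI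
    have h1 : Ideal.span (Set.range L) ≤ p := by
      rw [Ideal.span_le]
      rintro _ ⟨w, rfl⟩
      have : w ∈ (p.restrictScalars ℝ).comap L := by rw [hpt]; trivial
      exact this
    have h2 : M ≤ p := Ideal.IsPrime.le_of_pow_le (hL.trans h1)
    apply hIs I hI
    obtain ⟨u, rfl⟩ := Ideal.Quotient.mk_surjective x
    have key : ∀ a, a ∈ p ↔ a * u ∈ I := by
      intro a
      rw [hx, Submodule.mem_colon_singleton, Submodule.mem_bot, ← Ideal.Quotient.eq_zero_iff_mem]
      rfl
    refine ⟨u, ?_, fun a ha => (key a).1 (h2 ha)⟩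
    intro hu
    apply hprime.ne_top
    rw [Ideal.eq_top_iff_one, key]
    simpa using hu
  have := Subspace.biUnion_ne_univ_of_top_notMem hs
  rw [Set.ne_univ_iff_exists_notMem] at this
  obtain ⟨c, hc⟩ := this
  refine ⟨c, fun I hI u hu => ?_⟩
  by_contra hne
  apply hc
  have h3 : L c ∈ ⋃ p ∈ associatedPrimes R (R ⧸ I), (p : Set R) := by
    rw [biUnion_associatedPrimes_eq_zero_divisors]
    refine ⟨Ideal.Quotient.mk I u, by rwa [Ne, Ideal.Quotient.eq_zero_iff_mem], ?_⟩
    have : L c • Ideal.Quotient.mk I u = Ideal.Quotient.mk I (L c * u) := rfl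
    rw [this, Ideal.Quotient.eq_zero_iff_mem]
    exact hu
  simp only [Set.mem_iUnion, exists_prop] at h3 ⊢
  obtain ⟨p, hp, hcp⟩ := h3
  refine ⟨(p.restrictScalars ℝ).comap L, Finset.mem_image.2 ⟨p, ?_, rfl⟩, hcp⟩
  rw [hP, Set.Finite.mem_toFinset]
  simp only [Set.mem_iUnion, exists_prop]
  exact ⟨I, hI, hp⟩

theorem depth_thm [IsNoetherianRing R] [Algebra ℝ R] {M : Ideal R} [hM : M.IsMaximal]
    (z : List R) : ∀ (I : Ideal R) (w : List R), z.length < w.length → RegL I z → RegL I w →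
      (∀ x ∈ z, x ∈ M) → (∀ x ∈ w, x ∈ M) → ¬ SocMod M (I ⊔ Ideal.ofList z) := by
  induction z with
  | nil =>
    intro I w hlen _ hw _ hwM
    match w, hlen, hw, hwM with
    | b :: w, _, hw, hwM =>
      exact soc_tails w (fun x hx => hwM x (List.mem_cons_of_mem _ hx)) hw.1 b
        (hwM b List.mem_cons_self) hw.2 [] (by simp [List.mem_tails])
  | cons a z ih =>
    intro I w hlen hz hw hzM hwM
    match w, hlen, hw, hwM with
    | b :: w, hlen, hw, hwM =>
      have hzM' : ∀ x ∈ z, x ∈ M := fun x hx => hzM x (List.mem_cons_of_mem _ hx)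
      have hwM' : ∀ x ∈ w, x ∈ M := fun x hx => hwM x (List.mem_cons_of_mem _ hx)
      have t1 := soc_tails z hzM' hz.1 a (hzM a List.mem_cons_self) hz.2
      have t2 := soc_tails w hwM' hw.1 b (hwM b List.mem_cons_self) hw.2
      obtain ⟨⟨c, hcM⟩, hc⟩ := exists_nzd (M := M) ((M.restrictScalars ℝ).subtype) 1 (by
        rw [pow_one]
        intro x hx
        exact Ideal.subset_span ⟨⟨x, hx⟩, rfl⟩)
        ((z.tails.map fun s => I ⊔ Ideal.ofList s) ++ (w.tails.map fun s => I ⊔ Ideal.ofList s)) (by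
          intro J hJ
          rw [List.mem_append, List.mem_map, List.mem_map] at hJ
          rcases hJ with ⟨s, hs, rfl⟩ | ⟨s, hs, rfl⟩
          · exact t1 s hs
          · exact t2 s hs)
      have hcM : c ∈ M := hcM
      have hc1 : ∀ s ∈ z.tails, NzdMod (I ⊔ Ideal.ofList s) c := fun s hs =>
        hc _ (List.mem_append_left _ (List.mem_map.2 ⟨s, hs, rfl⟩))
      have hc2 : ∀ s ∈ w.tails, NzdMod (I ⊔ Ideal.ofList s) c := fun s hs =>
        hc _ (List.mem_append_right _ (List.mem_map.2 ⟨s, hs, rfl⟩))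
      intro hsoc
      rw [Ideal.ofList_cons, sup_comm (Ideal.span {a}), ← sup_assoc] at hsoc
      have := soc_exchange hz.2 (hc1 z (by simp [List.mem_tails])) hcM hsoc
      rw [sup_right_comm] at this
      exact ih (I ⊔ Ideal.span {c}) w (by simpa using hlen) (regL_front z hz.1 hc1)
        (regL_front w hw.1 hc2) hzM' hwM' this

/-- existence of a regular sequence of linear combinations -/
theorem exists_regL [IsNoetherianRing R] [Algebra ℝ R] {M : Ideal R} [hM : M.IsMaximal]
    {W : Type} [AddCommGroup W] [Module ℝ W] (L : W →ₗ[ℝ] R) (k : ℕ)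
    (hL : M ^ k ≤ Ideal.span (Set.range L)) (hLM : ∀ c, L c ∈ M)
    (w : List R) (hw : RegL ⊥ w) (hwM : ∀ x ∈ w, x ∈ M) (r : ℕ) (hr : r ≤ w.length) :
    ∃ cs : List W, cs.length = r ∧ RegL ⊥ (cs.map L) := by
  induction r with
  | zero => exact ⟨[], rfl, trivial⟩
  | succ r ih =>
    obtain ⟨cs, hcs, hreg⟩ := ih (by omega)
    have := depth_thm (M := M) (cs.map L) ⊥ w (by simp; omega) hreg hw (by
      intro x hx
      obtain ⟨c, _, rfl⟩ := List.mem_map.1 hx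
      exact hLM c) hwM
    obtain ⟨c, hc⟩ := exists_nzd L k hL [⊥ ⊔ Ideal.ofList (cs.map L)] (by
      intro I hI
      rw [List.mem_singleton] at hI
      rwa [hI])
    exact ⟨c :: cs, by simp [hcs], hreg, hc _ (by simp)⟩

theorem linearIndependent_of_regL [Algebra ℝ R] {M : Ideal R} [hM : M.IsMaximal]
    {W : Type} [AddCommGroup W] [Module ℝ W] (L : W →ₗ[ℝ] R) (hLM : ∀ c, L c ∈ M)
    (cs : List W) (h : RegL ⊥ (cs.map L)) : 
    cs.length ≤ Module.finrank ℝ (Submodule.span ℝ {c | c ∈ cs}) := by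
  induction cs with
  | nil => simp
  | cons a cs ih =>
    have h1 := ih h.1
    have hlt : Submodule.span ℝ {c | c ∈ cs} < Submodule.span ℝ {c | c ∈ a :: cs} := by
      refine lt_of_le_of_ne (Submodule.span_mono fun x hx => List.mem_cons_of_mem _ hx) ?_
      intro heq
      have ha : a ∈ Submodule.span ℝ {c | c ∈ cs} := by
        rw [heq]; exact Submodule.subset_span (by simp)
      have h2 : L a ∈ Ideal.ofList (cs.map L) := by
        have : Submodule.span ℝ {c | c ∈ cs} ≤
            ((Ideal.ofList (cs.map L)).restrictScalars ℝ).comap L := by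
          rw [Submodule.span_le]
          intro x hx
          exact Ideal.subset_span (List.mem_map.2 ⟨x, hx, rfl⟩)
        exact this ha
      have h3 := h.2 1 (by rw [mul_one]; exact Ideal.mem_sup_right h2)
      rw [bot_sup_eq] at h3
      apply hM.ne_top
      rw [Ideal.eq_top_iff_one]
      have h4 : Ideal.ofList (cs.map L) ≤ M := by
        unfold Ideal.ofList
        rw [Ideal.span_le]
        intro x hx
        obtain ⟨c, _, rfl⟩ := List.mem_map.1 hx
        exact hLM c
      exact h4 h3
    have : FiniteDimensional ℝ (Submodule.span ℝ {c | c ∈ a :: cs}) :=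
      FiniteDimensional.span_of_finite ℝ (List.finite_toSet _)
    have := Submodule.finrank_lt_finrank_of_lt hlt
    simp only [List.length_cons]
    omega

end DepthTheory
section FilteredCore

open MvPolynomial

theorem hC_mul {n : ℕ} {z : MvPolynomial (Fin n) ℝ} {d : ℕ} (hz : z.IsHomogeneous d)
    (s : MvPolynomial (Fin n) ℝ) (o : ℕ) :
    homogeneousComponent o (z * s) = if d ≤ o then z * homogeneousComponent (o - d) s else 0 := by
  let _ := MvPolynomial.gradedAlgebra (σ := Fin n) (R := ℝ)
  have := DirectSum.coe_decompose_mul_of_left_mem (homogeneousSubmodule (Fin n) ℝ) (b := s) o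
    ((mem_homogeneousSubmodule d z).2 hz)
  have e : ∀ φ : MvPolynomial (Fin n) ℝ, ∀ i, ((DirectSum.decompose (homogeneousSubmodule (Fin n) ℝ)
      φ i : homogeneousSubmodule (Fin n) ℝ i) : MvPolynomial (Fin n) ℝ) =
        homogeneousComponent i φ := fun φ i => decomposition.decompose'_apply φ i
  rw [e, e] at this
  exact this

variable {n : ℕ} {E : Type} [CommRing E] [Algebra ℝ E] (ι : MvPolynomial (Fin n) ℝ →ₐ[ℝ] E)

/-- the ideal of `E` generated by the coordinates. -/
noncomputable def mId : Ideal E := (idealOfVars (Fin n) ℝ).map ι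

theorem hom_mem_pow {p : MvPolynomial (Fin n) ℝ} {o : ℕ} (hp : p.IsHomogeneous o) :
    p ∈ idealOfVars (Fin n) ℝ ^ o := by
  rw [mem_pow_idealOfVars_iff]
  intro x hx
  exact (hp.degree_eq_sum_deg_support hx).le

theorem iota_mem_pow {p : MvPolynomial (Fin n) ℝ} {o : ℕ} (hp : p.IsHomogeneous o) :
    ι p ∈ mId ι ^ o := by
  rw [mId, ← Ideal.map_pow]
  exact Ideal.mem_map_of_mem ι (hom_mem_pow hp)

theorem pow_anti {a b : ℕ} (h : a ≤ b) : mId ι ^ b ≤ mId ι ^ a := Ideal.pow_le_pow_right h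

/-- the hypotheses on the local algebra `E` -/
structure GoodAlg : Prop where
  loc : mId ι ≤ Ideal.jacobson ⊥
  inj : ∀ (K : ℕ) (p : MvPolynomial (Fin n) ℝ), p.IsHomogeneous K → ι p ∈ mId ι ^ (K + 1) → p = 0
  val : ∀ e : E, ∃ c : ℝ, e - algebraMap ℝ E c ∈ mId ι

variable {ι}

theorem expand_one (h : GoodAlg ι) {x : E} (hx : x ∈ mId ι) :
    ∃ p : MvPolynomial (Fin n) ℝ, p.IsHomogeneous 1 ∧ x - ι p ∈ mId ι ^ 2 := by
  have hx' : x ∈ Ideal.span (Set.range fun i => ι (X i)) := by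
    rw [mId, idealOfVars, Ideal.map_span, ← Set.range_comp] at hx
    exact hx
  obtain ⟨c, rfl⟩ := Ideal.mem_span_range_iff_exists_fun.1 hx'
  choose r hr using fun i => h.val (c i)
  refine ⟨∑ i, C (r i) * X i, ?_, ?_⟩
  · apply IsHomogeneous.sum
    intro i _
    simpa using (isHomogeneous_C (Fin n) (r i)).mul (isHomogeneous_X ℝ i)
  · rw [map_sum, ← Finset.sum_sub_distrib]
    refine Ideal.sum_mem _ fun i _ => ?_
    rw [map_mul, ← sub_mul, pow_two]
    have : ι (C (r i)) = algebraMap ℝ E (r i) := by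
      rw [← algebraMap_eq]; exact ι.commutes _
    rw [this]
    refine Ideal.mul_mem_mul (hr i) ?_
    simpa using iota_mem_pow ι (isHomogeneous_X ℝ i)

theorem expand (h : GoodAlg ι) (o : ℕ) : ∀ x ∈ mId ι ^ o,
    ∃ p : MvPolynomial (Fin n) ℝ, p.IsHomogeneous o ∧ x - ι p ∈ mId ι ^ (o + 1) := by
  induction o with
  | zero =>
    intro x _
    obtain ⟨c, hc⟩ := h.val x
    refine ⟨C c, isHomogeneous_C _ _, ?_⟩
    have : ι (C c) = algebraMap ℝ E c := by
      rw [← algebraMap_eq]; exact ι.commutes _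
    simpa [this] using hc
  | succ o ih =>
    intro x hx
    rw [pow_succ] at hx
    induction hx using Submodule.mul_induction_on' with
    | mem_mul_mem a ha b hb =>
      obtain ⟨p, hp, hp'⟩ := ih a ha
      obtain ⟨q, hq, hq'⟩ := expand_one h hb
      refine ⟨p * q, hp.mul hq, ?_⟩
      have : a * b - ι (p * q) = (a - ι p) * b + ι p * (b - ι q) := by
        rw [map_mul]; ring
      rw [this]
      refine Ideal.add_mem _ ?_ ?_
      · rw [pow_succ]
        exact Ideal.mul_mem_mul hp' hb
      · have := Ideal.mul_mem_mul (iota_mem_pow ι hp) hq'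
        rwa [← pow_add] at this
    | add a _ b _ iha ihb =>
      obtain ⟨p, hp, hp'⟩ := iha
      obtain ⟨q, hq, hq'⟩ := ihb
      refine ⟨p + q, hp.add hq, ?_⟩
      rw [map_add, add_sub_add_comm]
      exact Ideal.add_mem _ hp' hq'

theorem expand_all (h : GoodAlg ι) (K : ℕ) (x : E) :
    ∃ p : MvPolynomial (Fin n) ℝ, x - ι p ∈ mId ι ^ K := by
  induction K with
  | zero => exact ⟨0, by simp⟩
  | succ K ih =>
    obtain ⟨p, hp⟩ := ih
    obtain ⟨q, _, hq⟩ := expand h K _ hp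
    exact ⟨p + q, by rw [map_add, ← sub_sub]; exact hq⟩

theorem comp_zero (h : GoodAlg ι) {K : ℕ} {y : MvPolynomial (Fin n) ℝ} (hy : ι y ∈ mId ι ^ K)
    (j : ℕ) (hj : j < K) : homogeneousComponent j y = 0 := by
  induction j using Nat.strong_induction_on with
  | _ j ih =>
    apply h.inj j _ (homogeneousComponent_isHomogeneous j y)
    have hrest : y - homogeneousComponent j y ∈ idealOfVars (Fin n) ℝ ^ (j + 1) := by
      rw [mem_pow_idealOfVars_iff]
      intro x hx
      by_contra hlt
      rw [mem_support_iff, coeff_sub, coeff_homogeneousComponent] at hx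
      rcases lt_or_eq_of_le (Nat.lt_succ_iff.1 (not_le.1 hlt)) with h1 | h1
      · have := congrArg (coeff x) (ih _ h1 (h1.trans hj))
        rw [coeff_homogeneousComponent, if_pos rfl, coeff_zero] at this
        rw [this, if_neg h1.ne] at hx
        simp at hx
      · rw [if_pos h1] at hx
        simp at hx
    have h2 : ι (y - homogeneousComponent j y) ∈ mId ι ^ (j + 1) := by
      rw [mId, ← Ideal.map_pow]
      exact Ideal.mem_map_of_mem ι hrest
    have h3 := Ideal.sub_mem _ (pow_anti ι (Nat.succ_le_of_lt hj) hy) h2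
    rw [map_sub, sub_sub_cancel] at h3
    exact h3

variable {W : Type}

theorem lift_up (h : GoodAlg ι) {d : ℕ} (gL : W → MvPolynomial (Fin n) ℝ) (fL : W → E)
    (hg : ∀ c, (gL c).IsHomogeneous d) (hfg : ∀ c, fL c - ι (gL c) ∈ mId ι ^ (d + 1))
    (cs : List W) (o : ℕ) (u : E) (hu : u ∈ Ideal.ofList (cs.map fL) * mId ι ^ o) :
    ∃ β ∈ Ideal.ofList (cs.map gL), β.IsHomogeneous (o + d) ∧ u - ι β ∈ mId ι ^ (o + d + 1) := by
  induction hu using Submodule.mul_induction_on' with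
  | mem_mul_mem a ha b hb =>
    unfold Ideal.ofList at ha
    induction ha using Submodule.span_induction generalizing b with
    | mem x hx =>
      obtain ⟨c, hc, rfl⟩ := List.mem_map.1 hx
      obtain ⟨q, hq, hq'⟩ := expand h o b hb
      refine ⟨gL c * q, Ideal.mul_mem_right _ _ (Ideal.subset_span (List.mem_map.2 ⟨c, hc, rfl⟩)),
        by rw [add_comm]; exact (hg c).mul hq, ?_⟩
      have : fL c * b - ι (gL c * q) = (fL c - ι (gL c)) * b + ι (gL c) * (b - ι q) := by
        rw [map_mul]; ring
      rw [this]
      refine Ideal.add_mem _ ?_ ?_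
      · have := Ideal.mul_mem_mul (hfg c) hb
        rw [← pow_add] at this
        convert this using 2; ring
      · have := Ideal.mul_mem_mul (iota_mem_pow ι (hg c)) hq'
        rw [← pow_add] at this
        convert this using 2; ring
    | zero => exact ⟨0, zero_mem _, isHomogeneous_zero _ _ _, by simp⟩
    | add x y _ _ ihx ihy =>
      obtain ⟨p, hp, hp', hp''⟩ := ihx b hb
      obtain ⟨q, hq, hq', hq''⟩ := ihy b hb
      refine ⟨p + q, add_mem hp hq, hp'.add hq', ?_⟩
      rw [map_add, add_mul, add_sub_add_comm]
      exact Ideal.add_mem _ hp'' hq''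
    | smul r x _ ih =>
      have := ih (r * b) (Ideal.mul_mem_left _ _ hb)
      rwa [← mul_assoc, mul_comm x r] at this
  | add a _ b _ iha ihb =>
    obtain ⟨p, hp, hp', hp''⟩ := iha
    obtain ⟨q, hq, hq', hq''⟩ := ihb
    refine ⟨p + q, add_mem hp hq, hp'.add hq', ?_⟩
    rw [map_add, add_sub_add_comm]
    exact Ideal.add_mem _ hp'' hq''

theorem push_down {d : ℕ} (gL : W → MvPolynomial (Fin n) ℝ) (fL : W → E)
    (hg : ∀ c, (gL c).IsHomogeneous d) (hfg : ∀ c, fL c - ι (gL c) ∈ mId ι ^ (d + 1))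
    (cs : List W) (o : ℕ) (α : MvPolynomial (Fin n) ℝ) (hα : α ∈ Ideal.ofList (cs.map gL)) :
    ι (homogeneousComponent o α) ∈ Ideal.ofList (cs.map fL) ⊔ mId ι ^ (o + 1) := by
  have key : ∀ s : MvPolynomial (Fin n) ℝ, ι (homogeneousComponent o (s * α)) ∈
      Ideal.ofList (cs.map fL) ⊔ mId ι ^ (o + 1) := by
    unfold Ideal.ofList at hα
    induction hα using Submodule.span_induction with
    | mem x hx =>
      obtain ⟨c, hc, rfl⟩ := List.mem_map.1 hx
      intro s
      rw [mul_comm, hC_mul (hg c)]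
      split_ifs with hdo
      · set s' := homogeneousComponent (o - d) s with hs'
        have hs : s'.IsHomogeneous (o - d) := homogeneousComponent_isHomogeneous _ _
        have : ι (gL c * s') = fL c * ι s' - (fL c - ι (gL c)) * ι s' := by
          rw [map_mul]; ring
        rw [this]
        refine Ideal.sub_mem _ (Ideal.mem_sup_left (Ideal.mul_mem_right _ _
          (Ideal.subset_span (List.mem_map.2 ⟨c, hc, rfl⟩)))) (Ideal.mem_sup_right ?_)
        have := Ideal.mul_mem_mul (hfg c) (iota_mem_pow ι hs)
        rw [← pow_add] at this
        convert this using 2; omega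
      · rw [map_zero]; exact zero_mem _
    | zero => intro s; simp
    | add x y _ _ ihx ihy =>
      intro s
      rw [mul_add, map_add, map_add]
      exact Ideal.add_mem _ (ihx s) (ihy s)
    | smul r x _ ih =>
      intro s
      rw [smul_eq_mul, ← mul_assoc]
      exact ih _
  simpa using key 1

theorem strict (h : GoodAlg ι) {d : ℕ} (gL : W → MvPolynomial (Fin n) ℝ) (fL : W → E)
    (hg : ∀ c, (gL c).IsHomogeneous d) (hfg : ∀ c, fL c - ι (gL c) ∈ mId ι ^ (d + 1))
    (cs : List W) (hreg : RegL ⊥ (cs.map gL)) : ∀ K : ℕ,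
    Ideal.ofList (cs.map fL) ⊓ mId ι ^ K ≤ Ideal.ofList (cs.map fL) * mId ι ^ (K - d) := by
  induction cs with
  | nil => intro K; simp
  | cons c cs ih =>
    have ih := ih hreg.1
    intro K e he
    obtain ⟨he1, he2⟩ := he
    rw [List.map_cons, Ideal.ofList_cons] at he1 ⊢
    set I := Ideal.ofList (cs.map fL) with hI
    have hfm : fL c ∈ mId ι ^ d := by
      have := Ideal.add_mem _ (pow_anti ι (Nat.le_succ d) (hfg c)) (iota_mem_pow ι (hg c))
      simpa using this
    have step : ∀ o, o + d ≤ K ∨ o = 0 → ∃ u ∈ I, ∃ a ∈ mId ι ^ o, e = u + fL c * a := by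
      intro o
      induction o with
      | zero =>
        intro _
        obtain ⟨x, hx, u, hu, rfl⟩ := Submodule.mem_sup.1 he1
        obtain ⟨a, rfl⟩ := Ideal.mem_span_singleton'.1 hx
        exact ⟨u, hu, a, by simp, by ring⟩
      | succ o iho =>
        intro ho
        have ho : o + 1 + d ≤ K := by omega
        obtain ⟨u, hu, a, ha, hea⟩ := iho (Or.inl (by omega))
        have hfa : fL c * a ∈ mId ι ^ (o + d) := by
          rw [add_comm, pow_add]; exact Ideal.mul_mem_mul hfm ha
        have hum : u ∈ mId ι ^ (o + d) := by
          have : u = e - fL c * a := by rw [hea]; ring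
          rw [this]
          exact Ideal.sub_mem _ (pow_anti ι (by omega) he2) hfa
        have hu2 : u ∈ I * mId ι ^ o := by
          have := ih (o + d) ⟨hu, hum⟩
          simpa using this
        obtain ⟨β, hβ, hβh, hβu⟩ := lift_up h gL fL hg hfg cs o u hu2
        obtain ⟨α, hαh, hαa⟩ := expand h o a ha
        have hzero : β + gL c * α = 0 := by
          apply h.inj (o + d) _ (hβh.add (by rw [add_comm o d]; exact (hg c).mul hαh))
          have h1 : ι (β + gL c * α) = e - (u - ι β) - (fL c - ι (gL c)) * a
              - ι (gL c) * (a - ι α) := by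
            rw [map_add, map_mul, hea]; ring
          rw [h1]
          refine Ideal.sub_mem _ (Ideal.sub_mem _ (Ideal.sub_mem _ (pow_anti ι (by omega) he2) hβu)
            ?_) ?_
          · have := Ideal.mul_mem_mul (hfg c) ha
            rw [← pow_add] at this
            convert this using 2; ring
          · have := Ideal.mul_mem_mul (iota_mem_pow ι (hg c)) hαa
            rw [← pow_add] at this
            convert this using 2; ring
        have hα : α ∈ Ideal.ofList (cs.map gL) := by
          have := hreg.2 α (by
            rw [bot_sup_eq, eq_neg_of_add_eq_zero_right hzero]
            exact neg_mem hβ)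
          rwa [bot_sup_eq] at this
        have h2 := push_down gL fL hg hfg cs o α hα
        rw [homogeneousComponent_eq_self hαh] at h2
        have h3 : a ∈ I ⊔ mId ι ^ (o + 1) := by
          have := Ideal.add_mem _ h2 (Ideal.mem_sup_right hαa)
          simpa using this
        obtain ⟨v, hv, a', ha', rfl⟩ := Submodule.mem_sup.1 h3
        exact ⟨u + fL c * v, Ideal.add_mem _ hu (Ideal.mul_mem_left _ _ hv), a', ha',
          by rw [hea]; ring⟩
    obtain ⟨u, hu, a, ha, hea⟩ := step (K - d) (by omega)
    by_cases hKd : K ≤ d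
    · rw [Nat.sub_eq_zero_of_le hKd, pow_zero, Ideal.one_eq_top, Ideal.mul_top]
      exact he1
    have hfa : fL c * a ∈ mId ι ^ K := by
      have := Ideal.mul_mem_mul hfm ha
      rw [← pow_add] at this
      convert this using 2; omega
    have hu2 : u ∈ I * mId ι ^ (K - d) := ih K ⟨hu, by
      have : u = e - fL c * a := by rw [hea]; ring
      rw [this]
      exact Ideal.sub_mem _ he2 hfa⟩
    rw [Ideal.sup_mul, hea]
    exact Ideal.add_mem _ (Ideal.mem_sup_right hu2)
      (Ideal.mem_sup_left (Ideal.mul_mem_mul (Ideal.mem_span_singleton_self _) ha))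

theorem graded_le (h : GoodAlg ι) {d : ℕ} (gL : W → MvPolynomial (Fin n) ℝ) (fL fL' : W → E)
    (hg : ∀ c, (gL c).IsHomogeneous d) (hfg : ∀ c, fL c - ι (gL c) ∈ mId ι ^ (d + 1))
    (hfg' : ∀ c, fL' c - ι (gL c) ∈ mId ι ^ (d + 1))
    (cs : List W) (hreg : RegL ⊥ (cs.map gL)) (j : ℕ) :
    mId ι ^ j ⊓ (Ideal.ofList (cs.map fL) ⊔ mId ι ^ (j + 1)) ≤
      mId ι ^ j ⊓ (Ideal.ofList (cs.map fL') ⊔ mId ι ^ (j + 1)) := by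
  rintro e ⟨he1, he2⟩
  refine ⟨he1, ?_⟩
  obtain ⟨a, ha, b, hb, rfl⟩ := Submodule.mem_sup.1 he2
  have ham : a ∈ mId ι ^ j := by
    have := Ideal.sub_mem _ he1 (pow_anti ι (Nat.le_succ j) hb)
    simpa using this
  have ha2 := strict h gL fL hg hfg cs hreg j ⟨ha, ham⟩
  refine Ideal.add_mem _ ?_ (Ideal.mem_sup_right hb)
  clear ham he1 he2 ha
  induction ha2 using Submodule.mul_induction_on' with
  | mem_mul_mem x hx y hy =>
    unfold Ideal.ofList at hx
    induction hx using Submodule.span_induction generalizing y with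
    | mem x hx =>
      obtain ⟨c, hc, rfl⟩ := List.mem_map.1 hx
      have : fL c * y = fL' c * y + ((fL c - ι (gL c)) - (fL' c - ι (gL c))) * y := by ring
      rw [this]
      refine Ideal.add_mem _ (Ideal.mem_sup_left (Ideal.mul_mem_right _ _
        (Ideal.subset_span (List.mem_map.2 ⟨c, hc, rfl⟩)))) (Ideal.mem_sup_right ?_)
      have := Ideal.mul_mem_mul (Ideal.sub_mem _ (hfg c) (hfg' c)) hy
      rw [← pow_add] at this
      exact pow_anti ι (by omega) this
    | zero => simp
    | add x y _ _ ihx ihy => rw [add_mul]; exact Ideal.add_mem _ (ihx _ hy) (ihy _ hy)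
    | smul r x _ ih =>
      have := ih (r * y) (Ideal.mul_mem_left _ _ hy)
      rwa [← mul_assoc, mul_comm x r] at this
  | add x _ y _ ihx ihy => exact Ideal.add_mem _ ihx ihy

theorem rank_quot_step {V : Type} [AddCommGroup V] [Module ℝ V] (p q : Submodule ℝ V) :
    Module.rank ℝ (V ⧸ q) = Module.rank ℝ (V ⧸ (p ⊔ q)) +
      Module.rank ℝ (p ⧸ (p ⊓ q).comap p.subtype) := by
  rw [← Submodule.rank_quotient_add_rank (p.map q.mkQ)]
  congr 1
  · rw [sup_comm]
    exact (Submodule.quotientQuotientEquivQuotientSup q p).rank_eq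
  · have h1 : LinearMap.range (q.mkQ ∘ₗ p.subtype) = p.map q.mkQ := by
      rw [LinearMap.range_comp, Submodule.range_subtype]
    have h2 : LinearMap.ker (q.mkQ ∘ₗ p.subtype) = (p ⊓ q).comap p.subtype := by
      rw [LinearMap.ker_comp, Submodule.ker_mkQ, Submodule.comap_inf]
      simp
    rw [← h1, ← h2]
    exact (LinearMap.quotKerEquivRange _).rank_eq.symm

theorem rank_filtration {V : Type} [AddCommGroup V] [Module ℝ V] (A : ℕ → Submodule ℝ V)
    (hA0 : A 0 = ⊤) (hA : ∀ j, A (j + 1) ≤ A j) (B B' : Submodule ℝ V)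
    (hB : ∀ j, A j ⊓ (B ⊔ A (j + 1)) = A j ⊓ (B' ⊔ A (j + 1))) (j : ℕ) :
    Module.rank ℝ (V ⧸ (B ⊔ A j)) = Module.rank ℝ (V ⧸ (B' ⊔ A j)) := by
  induction j with
  | zero => rw [hA0, sup_top_eq, sup_top_eq]
  | succ j ih =>
    rw [rank_quot_step (A j) (B ⊔ A (j + 1)), rank_quot_step (A j) (B' ⊔ A (j + 1)), hB j]
    have : ∀ C : Submodule ℝ V, A j ⊔ (C ⊔ A (j + 1)) = C ⊔ A j := fun C => by
      rw [sup_left_comm, sup_eq_left.2 (hA j)]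
    rw [this, this, ih]

theorem vars_maximal : (idealOfVars (Fin n) ℝ).IsMaximal := by
  have : idealOfVars (Fin n) ℝ = RingHom.ker (constantCoeff : MvPolynomial (Fin n) ℝ →+* ℝ) := by
    ext p
    rw [RingHom.mem_ker, ← pow_one (idealOfVars (Fin n) ℝ), mem_pow_idealOfVars_iff',
      constantCoeff_eq]
    constructor
    · intro h
      exact h 0 (by simp)
    · intro h x hx
      have : x = 0 := by
        rwa [Nat.lt_one_iff, Finsupp.degree_eq_zero_iff] at hx
      rw [this]; exact h
  rw [this]
  exact RingHom.ker_isMaximal_of_surjective _ (fun r => ⟨C r, by simp⟩)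

theorem ofList_map_X (l : List (Fin n)) : Ideal.ofList (l.map (X : Fin n → MvPolynomial (Fin n) ℝ))
    = Ideal.span (Set.image X {i | i ∈ l}) := by
  unfold Ideal.ofList
  congr 1
  ext x
  simp

theorem regL_vars (l : List (Fin n)) (hl : l.Nodup) :
    RegL ⊥ (l.map (X : Fin n → MvPolynomial (Fin n) ℝ)) := by
  induction l with
  | nil => trivial
  | cons a l ih =>
    rw [List.nodup_cons] at hl
    refine ⟨ih hl.2, ?_⟩
    intro u hu
    rw [bot_sup_eq, ofList_map_X, mem_ideal_span_X_image] at hu ⊢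
    intro m hm
    obtain ⟨i, hi, hne⟩ := hu (Finsupp.single a 1 + m) (by
      rw [mem_support_iff, coeff_X_mul]
      exact mem_support_iff.1 hm)
    refine ⟨i, hi, ?_⟩
    have : a ≠ i := by
      rintro rfl
      exact hl.1 hi
    simpa [Finsupp.single_apply, this] using hne

theorem span_eq_ofList {R : Type} [CommRing R] [Algebra ℝ R] (f : Fin n → R)
    (cs : List (Fin n → ℝ)) (hcs : Submodule.span ℝ {c | c ∈ cs} = ⊤) :
    Ideal.ofList (cs.map (Fintype.linearCombination ℝ f)) = Ideal.span (Set.range f) := by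
  apply le_antisymm
  · unfold Ideal.ofList
    rw [Ideal.span_le]
    intro x hx
    obtain ⟨c, _, rfl⟩ := List.mem_map.1 hx
    rw [Fintype.linearCombination_apply]
    refine Ideal.sum_mem _ fun i _ => ?_
    rw [Algebra.smul_def]
    exact Ideal.mul_mem_left _ _ (Ideal.subset_span ⟨i, rfl⟩)
  · rw [Ideal.span_le]
    rintro _ ⟨i, rfl⟩
    have h1 : Submodule.span ℝ {c | c ∈ cs} ≤
        ((Ideal.ofList (cs.map (Fintype.linearCombination ℝ f))).restrictScalars ℝ).comap
          (Fintype.linearCombination ℝ f) := by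
      rw [Submodule.span_le]
      intro x hx
      exact Ideal.subset_span (List.mem_map.2 ⟨x, hx, rfl⟩)
    have h2 : (Pi.single i 1 : Fin n → ℝ) ∈ Submodule.span ℝ {c | c ∈ cs} := by
      rw [hcs]; trivial
    have h3 := h1 h2
    rw [Submodule.mem_comap, Submodule.restrictScalars_mem,
      Fintype.linearCombination_apply_single, one_smul] at h3
    exact h3

theorem mId_fg (k : ℕ) : (mId ι ^ k).FG := by
  rw [mId, ← Ideal.map_pow]
  exact Ideal.FG.map (IsNoetherian.noetherian _) _

theorem exists_pow_le (h : GoodAlg ι) (J : Ideal E)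
    (hfin : Module.rank ℝ (E ⧸ J) < Cardinal.aleph0) : ∃ k, mId ι ^ k ≤ J := by
  have : Module.Finite ℝ (E ⧸ J) := Module.rank_lt_aleph0_iff.1 hfin
  have : IsArtinian ℝ (E ⧸ J) := inferInstance
  have : IsArtinian (E ⧸ J) (E ⧸ J) := isArtinian_of_tower ℝ this
  obtain ⟨k, hk⟩ := IsArtinian.monotone_stabilizes (R := E ⧸ J) (M := E ⧸ J)
    ⟨fun k => OrderDual.toDual (((mId ι).map (Ideal.Quotient.mk J)) ^ k),
      fun a b hab => Ideal.pow_le_pow_right hab⟩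
  have hk : ((mId ι).map (Ideal.Quotient.mk J)) ^ k = ((mId ι).map (Ideal.Quotient.mk J)) ^ (k + 1) :=
    hk (k + 1) (Nat.le_succ k)
  refine ⟨k, Submodule.le_of_le_smul_of_le_jacobson_bot (mId_fg k) h.loc ?_⟩
  intro x hx
  have h1 : Ideal.Quotient.mk J x ∈ (mId ι ^ (k + 1)).map (Ideal.Quotient.mk J) := by
    rw [Ideal.map_pow, ← hk, ← Ideal.map_pow]
    exact Ideal.mem_map_of_mem _ hx
  obtain ⟨y, hy, hyx⟩ := (Ideal.mem_map_iff_of_surjective _ Ideal.Quotient.mk_surjective).1 h1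
  have h2 : x - y ∈ J := by
    rw [← Ideal.Quotient.eq_zero_iff_mem, map_sub, hyx, sub_self]
  have h3 : mId ι • mId ι ^ k = mId ι ^ (k + 1) := by rw [smul_eq_mul, pow_succ']
  rw [h3]
  have := Ideal.add_mem _ (Ideal.mem_sup_left (T := mId ι ^ (k + 1)) h2) (Ideal.mem_sup_right hy)
  simpa using this

theorem vars_pow_le (h : GoodAlg ι) {d : ℕ} (g : Fin n → MvPolynomial (Fin n) ℝ)
    (hg : ∀ i, (g i).IsHomogeneous d) (k : ℕ)
    (hk : mId ι ^ k ≤ Ideal.span (Set.range fun i => ι (g i))) :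
    idealOfVars (Fin n) ℝ ^ k ≤ Ideal.span (Set.range g) := by
  rw [pow_idealOfVars_eq_span, Ideal.span_le]
  rintro _ ⟨x, hx, rfl⟩
  have hx : Finsupp.degree x = k := hx
  set q : MvPolynomial (Fin n) ℝ := monomial x 1 with hq
  have hqh : q.IsHomogeneous k := isHomogeneous_monomial _ hx
  obtain ⟨e, he⟩ := Ideal.mem_span_range_iff_exists_fun.1 (hk (iota_mem_pow ι hqh))
  choose s hs using fun i => expand_all h (k + 1) (e i)
  have h1 : ι (q - ∑ i, g i * s i) ∈ mId ι ^ (k + 1) := by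
    rw [map_sub, ← he, map_sum, ← Finset.sum_sub_distrib]
    refine Ideal.sum_mem _ fun i _ => ?_
    have : e i * ι (g i) - ι (g i * s i) = (e i - ι (s i)) * ι (g i) := by rw [map_mul]; ring
    rw [this]
    exact Ideal.mul_mem_right _ _ (hs i)
  have h2 := comp_zero h h1 k (Nat.lt_succ_self k)
  rw [map_sub, homogeneousComponent_eq_self hqh, map_sum, sub_eq_zero] at h2
  change q ∈ Ideal.span (Set.range g)
  rw [h2]
  refine Ideal.sum_mem _ fun i _ => ?_
  rw [hC_mul (hg i)]
  split_ifs
  · exact Ideal.mul_mem_right _ _ (Ideal.subset_span ⟨i, rfl⟩)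
  · exact zero_mem _

theorem core_thm (h : GoodAlg ι) {d : ℕ} (hd : 1 ≤ d) (g : Fin n → MvPolynomial (Fin n) ℝ)
    (hg : ∀ i, (g i).IsHomogeneous d) (f : Fin n → E)
    (hfg : ∀ i, f i - ι (g i) ∈ mId ι ^ (d + 1))
    (hfin : Module.rank ℝ (E ⧸ Ideal.span (Set.range fun i => ι (g i))) < Cardinal.aleph0) :
    Module.rank ℝ (E ⧸ Ideal.span (Set.range f)) =
      Module.rank ℝ (E ⧸ Ideal.span (Set.range fun i => ι (g i))) := by
  obtain ⟨k, hk⟩ := exists_pow_le h _ hfin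
  have hmax : (idealOfVars (Fin n) ℝ).IsMaximal := vars_maximal
  set gL := Fintype.linearCombination ℝ g with hgL
  set fL := Fintype.linearCombination ℝ f with hfL
  set fL' := Fintype.linearCombination ℝ (fun i => ι (g i)) with hfL'
  have hgLh : ∀ c, (gL c).IsHomogeneous d := by
    intro c
    rw [hgL, Fintype.linearCombination_apply]
    apply IsHomogeneous.sum
    intro i _
    rw [smul_eq_C_mul]
    simpa using (isHomogeneous_C (Fin n) (c i)).mul (hg i)
  have hfL'g : ∀ c, fL' c = ι (gL c) := by
    intro c
    rw [hfL', hgL, Fintype.linearCombination_apply, Fintype.linearCombination_apply, map_sum]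
    simp
  have hfgL' : ∀ c, fL' c - ι (gL c) ∈ mId ι ^ (d + 1) := by
    intro c; rw [hfL'g, sub_self]; exact zero_mem _
  have hfgL : ∀ c, fL c - ι (gL c) ∈ mId ι ^ (d + 1) := by
    intro c
    rw [← hfL'g, hfL, hfL', Fintype.linearCombination_apply, Fintype.linearCombination_apply,
      ← Finset.sum_sub_distrib]
    refine Ideal.sum_mem _ fun i _ => ?_
    rw [← smul_sub, Algebra.smul_def]
    exact Ideal.mul_mem_left _ _ (hfg i)
  have hgM : ∀ c, gL c ∈ idealOfVars (Fin n) ℝ := fun c => by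
    have := Ideal.pow_le_pow_right hd (hom_mem_pow (hgLh c))
    rwa [pow_one] at this
  obtain ⟨cs, hlen, hreg⟩ := exists_regL (M := idealOfVars (Fin n) ℝ) gL k
    ((vars_pow_le h g hg k hk).trans (Ideal.span_mono (by
      rintro _ ⟨i, rfl⟩
      exact ⟨Pi.single i 1, by rw [hgL, Fintype.linearCombination_apply_single, one_smul]⟩))) hgM
    ((List.finRange n).map X) (regL_vars _ (List.nodup_finRange n)) (by
      intro x hx
      obtain ⟨i, _, rfl⟩ := List.mem_map.1 hx
      exact Ideal.subset_span ⟨i, rfl⟩) n (by simp)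
  have hspan : Submodule.span ℝ {c | c ∈ cs} = ⊤ := by
    apply Submodule.eq_top_of_finrank_eq
    apply le_antisymm (Submodule.finrank_le _)
    have := linearIndependent_of_regL (M := idealOfVars (Fin n) ℝ) gL hgM cs hreg
    simpa [hlen] using this
  have e1 := span_eq_ofList f cs hspan
  have e2 := span_eq_ofList (fun i => ι (g i)) cs hspan
  rw [← hfL] at e1
  rw [← hfL'] at e2
  have hgr : ∀ j, mId ι ^ j ⊓ (Ideal.span (Set.range f) ⊔ mId ι ^ (j + 1)) =
      mId ι ^ j ⊓ (Ideal.span (Set.range fun i => ι (g i)) ⊔ mId ι ^ (j + 1)) := by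
    intro j
    rw [← e1, ← e2]
    exact le_antisymm (graded_le h gL fL fL' hgLh hfgL hfgL' cs hreg j)
      (graded_le h gL fL' fL hgLh hfgL' hfgL cs hreg j)
  have hk' : mId ι ^ k ≤ Ideal.span (Set.range f) := by
    refine Submodule.le_of_le_smul_of_le_jacobson_bot (mId_fg k) h.loc ?_
    have h3 : mId ι • mId ι ^ k = mId ι ^ (k + 1) := by rw [smul_eq_mul, pow_succ']
    rw [h3]
    have : mId ι ^ k ≤ mId ι ^ k ⊓ (Ideal.span (Set.range fun i => ι (g i)) ⊔ mId ι ^ (k + 1)) :=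
      le_inf le_rfl (hk.trans le_sup_left)
    rw [← hgr] at this
    exact this.trans inf_le_right
  have := rank_filtration (fun j => (mId ι ^ j).restrictScalars ℝ) (by simp)
    (fun j => pow_anti ι (Nat.le_succ j)) ((Ideal.span (Set.range f)).restrictScalars ℝ)
    ((Ideal.span (Set.range fun i => ι (g i))).restrictScalars ℝ) (by
      intro j
      have := congrArg (Submodule.restrictScalars ℝ) (hgr j)
      simpa only [Submodule.restrictScalars_inf, Submodule.restrictScalars_sup] using this) k
  have a1 : (mId ι ^ k).restrictScalars ℝ ≤ (Ideal.span (Set.range f)).restrictScalars ℝ := hk'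
  have a2 : (mId ι ^ k).restrictScalars ℝ ≤
    (Ideal.span (Set.range fun i => ι (g i))).restrictScalars ℝ := hk
  rw [sup_eq_left.2 a1, sup_eq_left.2 a2] at this
  rw [← (Submodule.Quotient.restrictScalarsEquiv ℝ (Ideal.span (Set.range f))).rank_eq, this,
    (Submodule.Quotient.restrictScalarsEquiv ℝ _).rank_eq]

end FilteredCore
section SmoothGermBasics

theorem contDiff_param_integral {n : ℕ} (H : Eucl n × ℝ → ℝ) (hH : ContDiff ℝ (⊤ : ℕ∞) H) :
    ContDiff ℝ (⊤ : ℕ∞) (fun x => ∫ t in (0 : ℝ)..1, H (x, t)) := by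
  let ρ : ContDiffBump (0 : ℝ) := ⟨2, 3, by norm_num, by norm_num⟩
  let k : ℝ → ℝ := (Ioc (0 : ℝ) 1).indicator (fun _ => (1 : ℝ))
  let g : Eucl n → ℝ → ℝ := fun p y => ρ y * H (p, -y)
  have hk : MeasureTheory.LocallyIntegrable k MeasureTheory.volume := by
    apply MeasureTheory.Integrable.locallyIntegrable
    rw [MeasureTheory.integrable_indicator_iff measurableSet_Ioc]
    exact MeasureTheory.integrableOn_const (by simp)
  have hg : ContDiffOn ℝ (⊤ : ℕ∞) (Function.HasUncurry.uncurry g)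
      ((univ : Set (Eucl n)) ×ˢ univ) := by
    apply ContDiff.contDiffOn
    have : Function.HasUncurry.uncurry g = fun q : Eucl n × ℝ => ρ q.2 * H (q.1, -q.2) := by
      funext q; rfl
    rw [this]
    exact (ρ.contDiff.comp contDiff_snd).mul
      (hH.comp (contDiff_fst.prodMk contDiff_snd.neg))
  have key := MeasureTheory.contDiffOn_convolution_right_with_param (μ := MeasureTheory.volume)
    (ContinuousLinearMap.mul ℝ ℝ) (g := g) (isOpen_univ) (isCompact_closedBall (0 : ℝ) 3)
    (by
      intro p x _ hx
      have : ρ x = 0 := by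
        apply ρ.zero_of_le_dist
        simp only [mem_closedBall, not_le] at hx
        exact hx.le
      simp [g, this]) hk hg
  rw [univ_prod_univ, contDiffOn_univ] at key
  have key2 := key.comp (contDiff_prodMk_left (0 : ℝ) : ContDiff ℝ (⊤ : ℕ∞) (fun x : Eucl n => (x, (0 : ℝ))))
  convert key2 using 1
  funext x
  simp only [Function.comp, MeasureTheory.convolution, ContinuousLinearMap.mul_apply', zero_sub, g,
    neg_neg]
  rw [intervalIntegral.integral_of_le zero_le_one, ← MeasureTheory.integral_indicator measurableSet_Ioc]
  congr 1
  funext t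
  by_cases ht : t ∈ Ioc (0 : ℝ) 1
  · have : ρ (-t) = 1 := by
      apply ρ.one_of_mem_closedBall
      simp only [mem_closedBall, dist_zero_right, norm_neg, Real.norm_eq_abs]
      rw [abs_of_pos ht.1]
      exact ht.2.trans (by norm_num [ρ])
    simp [k, ht, this]
  · simp [k, ht]

theorem hadamard {n : ℕ} (f : Eucl n → ℝ) (hf : ContDiff ℝ (⊤ : ℕ∞) f) :
    ∃ g : Fin n → Eucl n → ℝ, (∀ i, ContDiff ℝ (⊤ : ℕ∞) (g i)) ∧
      ∀ x, f x = f 0 + ∑ i, x i * g i x := by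
  have hdf : ContDiff ℝ (⊤ : ℕ∞) (fderiv ℝ f) := hf.fderiv_right (by simp)
  refine ⟨fun i x => ∫ t in (0 : ℝ)..1, fderiv ℝ f (t • x) (EuclideanSpace.single i 1), ?_, ?_⟩
  · intro i
    apply contDiff_param_integral
      (fun q : Eucl n × ℝ => fderiv ℝ f (q.2 • q.1) (EuclideanSpace.single i 1))
    exact (hdf.comp (contDiff_snd.smul contDiff_fst)).clm_apply contDiff_const
  · intro x
    have hd : ∀ t : ℝ, HasDerivAt (fun t : ℝ => f (t • x)) (fderiv ℝ f (t • x) x) t := by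
      intro t
      have h1 : HasDerivAt (fun t : ℝ => t • x) x t := by
        simpa using (hasDerivAt_id t).smul_const x
      exact ((hf.differentiable (by simp)) (t • x)).hasFDerivAt.comp_hasDerivAt t h1
    have hc : ∀ v : Eucl n, Continuous (fun t : ℝ => fderiv ℝ f (t • x) v) := fun v =>
      (hdf.continuous.comp (continuous_id.smul continuous_const)).clm_apply continuous_const
    have h2 := intervalIntegral.integral_eq_sub_of_hasDerivAt (a := 0) (b := 1)
      (fun t _ => hd t) ((hc x).intervalIntegrable _ _)
    simp only [one_smul, zero_smul] at h2
    have h3 : ∀ t : ℝ, fderiv ℝ f (t • x) x =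
        ∑ i, x i * fderiv ℝ f (t • x) (EuclideanSpace.single i 1) := by
      intro t
      have hx := (EuclideanSpace.basisFun (Fin n) ℝ).sum_repr x
      have := congrArg (fderiv ℝ f (t • x)) hx
      rw [← this, map_sum]
      simp
    simp_rw [h3] at h2
    rw [intervalIntegral.integral_finsetSum] at h2
    · simp_rw [intervalIntegral.integral_const_mul] at h2
      linarith
    · intro i _
      exact ((hc _).const_mul _).intervalIntegrable _ _

/-- the germ of a smooth function. -/
def sg {n : ℕ} (f : Eucl n → ℝ) (hf : ContDiff ℝ (⊤ : ℕ∞) f) : smoothGerms n :=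
  ⟨(f : Filter.Germ (𝓝 (0 : Eucl n)) ℝ), f, hf, rfl⟩

theorem sg_surj {n : ℕ} (e : smoothGerms n) : ∃ f hf, e = sg f hf := by
  obtain ⟨e, f, hf, rfl⟩ := e
  exact ⟨f, hf, rfl⟩

theorem sg_eq_iff {n : ℕ} {f g : Eucl n → ℝ} (hf : ContDiff ℝ (⊤ : ℕ∞) f)
    (hg : ContDiff ℝ (⊤ : ℕ∞) g) : sg f hf = sg g hg ↔ f =ᶠ[𝓝 0] g := by
  exact Subtype.ext_iff.trans Filter.Germ.coe_eq

theorem sg_add {n : ℕ} {f g : Eucl n → ℝ} (hf : ContDiff ℝ (⊤ : ℕ∞) f)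
    (hg : ContDiff ℝ (⊤ : ℕ∞) g) : sg f hf + sg g hg = sg (fun x => f x + g x) (hf.add hg) := rfl

theorem sg_mul {n : ℕ} {f g : Eucl n → ℝ} (hf : ContDiff ℝ (⊤ : ℕ∞) f)
    (hg : ContDiff ℝ (⊤ : ℕ∞) g) : sg f hf * sg g hg = sg (fun x => f x * g x) (hf.mul hg) := rfl

theorem sg_sub {n : ℕ} {f g : Eucl n → ℝ} (hf : ContDiff ℝ (⊤ : ℕ∞) f)
    (hg : ContDiff ℝ (⊤ : ℕ∞) g) : sg f hf - sg g hg = sg (fun x => f x - g x) (hf.sub hg) := rfl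

theorem sg_const {n : ℕ} (c : ℝ) :
    algebraMap ℝ (smoothGerms n) c = sg (fun _ => c) contDiff_const := by
  apply Subtype.ext
  change algebraMap ℝ (Filter.Germ (𝓝 (0 : Eucl n)) ℝ) c = _
  rw [Algebra.algebraMap_eq_smul_one, ← Filter.Germ.coe_one, ← Filter.Germ.coe_smul]
  change _ = ((fun _ => c : Eucl n → ℝ) : Filter.Germ (𝓝 (0 : Eucl n)) ℝ)
  congr 1
  funext x
  simp

theorem sg_sum {n : ℕ} {α : Type} (s : Finset α) (f : α → Eucl n → ℝ)
    (hf : ∀ i, ContDiff ℝ (⊤ : ℕ∞) (f i)) :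
    ∑ i ∈ s, sg (f i) (hf i) = sg (fun x => ∑ i ∈ s, f i x) (ContDiff.sum fun i _ => hf i) := by
  classical
  induction s using Finset.induction_on with
  | empty =>
    have := sg_const (n := n) 0
    rw [map_zero] at this
    simpa using this
  | insert a s ha ih =>
    rw [Finset.sum_insert ha, ih, sg_add]
    congr 1
    funext x
    rw [Finset.sum_insert ha]

theorem contDiff_coord {n : ℕ} (i : Fin n) : ContDiff ℝ (⊤ : ℕ∞) (fun x : Eucl n => x i) :=
  contDiff_euclidean.1 contDiff_id i

/-- the inclusion of polynomials into smooth germs. -/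
def iot (n : ℕ) : MvPolynomial (Fin n) ℝ →ₐ[ℝ] smoothGerms n :=
  MvPolynomial.aeval (fun i => sg (fun x : Eucl n => x i) (contDiff_coord i))

/-- the polynomial function of a polynomial. -/
def pf {n : ℕ} (p : MvPolynomial (Fin n) ℝ) : Eucl n → ℝ :=
  fun x => MvPolynomial.eval (fun i => x i) p

theorem pf_contDiff {n : ℕ} (p : MvPolynomial (Fin n) ℝ) : ContDiff ℝ (⊤ : ℕ∞) (pf p) := by
  induction p using MvPolynomial.induction_on with
  | C a =>
    have : pf (n := n) (MvPolynomial.C a) = fun _ => a := by funext x; simp [pf]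
    rw [this]
    exact contDiff_const
  | add p q hp hq =>
    have : pf (p + q) = fun x => pf p x + pf q x := by funext x; simp [pf]
    rw [this]
    exact hp.add hq
  | mul_X p i hp =>
    have : pf (p * MvPolynomial.X i) = fun x => pf p x * x i := by funext x; simp [pf]
    rw [this]
    exact hp.mul (contDiff_coord i)

theorem iot_eq {n : ℕ} (p : MvPolynomial (Fin n) ℝ) : iot n p = sg (pf p) (pf_contDiff p) := by
  induction p using MvPolynomial.induction_on with
  | C a =>
    rw [iot, MvPolynomial.algHom_C, sg_const]
    congr 1
    funext x
    simp [pf]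
  | add p q hp hq =>
    rw [map_add, hp, hq, sg_add]
    congr 1
    funext x
    simp [pf]
  | mul_X p i hp =>
    rw [map_mul, hp, iot, MvPolynomial.aeval_X, sg_mul]
    congr 1
    funext x
    simp [pf]

theorem X_mem_mId {n : ℕ} (i : Fin n) :
    sg (fun x : Eucl n => x i) (contDiff_coord i) ∈ mId (iot n) := by
  have : sg (fun x : Eucl n => x i) (contDiff_coord i) = iot n (MvPolynomial.X i) := by
    rw [iot, MvPolynomial.aeval_X]
  rw [this]
  apply Ideal.mem_map_of_mem
  exact Ideal.subset_span ⟨i, rfl⟩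

theorem mId_eq_span {n : ℕ} : mId (iot n) =
    Ideal.span (Set.range fun i => sg (fun x : Eucl n => x i) (contDiff_coord i)) := by
  rw [mId, MvPolynomial.idealOfVars, Ideal.map_span]
  congr 1
  rw [← Set.range_comp]
  congr 1
  funext i
  simp [iot]

theorem mem_mId_of_zero {n : ℕ} (f : Eucl n → ℝ) (hf : ContDiff ℝ (⊤ : ℕ∞) f) (h0 : f 0 = 0) :
    sg f hf ∈ mId (iot n) := by
  obtain ⟨g, hg, hfg⟩ := hadamard f hf
  have : sg f hf = ∑ i, sg (fun x : Eucl n => x i) (contDiff_coord i) * sg (g i) (hg i) := by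
    simp_rw [sg_mul]
    rw [sg_sum, sg_eq_iff]
    filter_upwards with x
    rw [hfg x, h0, zero_add]
  rw [this]
  exact Ideal.sum_mem _ fun i _ => Ideal.mul_mem_right _ _ (X_mem_mId i)

theorem zero_of_mem_mId {n : ℕ} (f : Eucl n → ℝ) (hf : ContDiff ℝ (⊤ : ℕ∞) f)
    (h : sg f hf ∈ mId (iot n)) : f 0 = 0 := by
  suffices ∀ e ∈ mId (iot n), (e : Filter.Germ (𝓝 (0 : Eucl n)) ℝ).value = 0 from this _ h
  intro e he
  rw [mId_eq_span] at he
  induction he using Submodule.span_induction with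
  | mem x hx => obtain ⟨i, rfl⟩ := hx; simp [sg]
  | zero => rfl
  | add x y _ _ hx hy =>
    obtain ⟨f, hf, rfl⟩ := sg_surj x
    obtain ⟨g, hg, rfl⟩ := sg_surj y
    change f 0 = 0 at hx
    change g 0 = 0 at hy
    change f 0 + g 0 = 0
    rw [hx, hy, add_zero]
  | smul a x _ hx =>
    obtain ⟨f, hf, rfl⟩ := sg_surj x
    obtain ⟨g, hg, rfl⟩ := sg_surj a
    change f 0 = 0 at hx
    change g 0 * f 0 = 0
    rw [hx, mul_zero]

theorem isUnit_sg {n : ℕ} (f : Eucl n → ℝ) (hf : ContDiff ℝ (⊤ : ℕ∞) f) (h0 : f 0 ≠ 0) :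
    IsUnit (sg f hf) := by
  have hc : ∀ᶠ x in 𝓝 (0 : Eucl n), f x ≠ 0 := hf.continuous.continuousAt.eventually_ne h0
  obtain ⟨r, hr, hball⟩ := Metric.eventually_nhds_iff_ball.1 hc
  let ρ : ContDiffBump (0 : Eucl n) := ⟨r / 4, r / 2, by linarith, by linarith⟩
  have hg : ContDiff ℝ (⊤ : ℕ∞) (fun x => ρ x * (f x)⁻¹) := by
    rw [contDiff_iff_contDiffAt]
    intro x
    by_cases hx : x ∈ ball (0 : Eucl n) r
    · exact ρ.contDiff.contDiffAt.mul (hf.contDiffAt.inv (hball x hx))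
    · have : (fun x => ρ x * (f x)⁻¹) =ᶠ[𝓝 x] fun _ => 0 := by
        have hx2 : x ∈ (closedBall (0 : Eucl n) (r / 2))ᶜ := by
          simp only [mem_ball, mem_compl_iff, mem_closedBall, not_le, not_lt] at *
          linarith
        filter_upwards [isClosed_closedBall.isOpen_compl.mem_nhds hx2] with y hy
        have : ρ y = 0 := by
          apply ρ.zero_of_le_dist
          simp only [mem_compl_iff, mem_closedBall, not_le] at hy
          exact hy.le
        simp [this]
      exact contDiffAt_const.congr_of_eventuallyEq this
  refine IsUnit.of_mul_eq_one (sg _ hg) ?_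
  rw [sg_mul, ← map_one (algebraMap ℝ (smoothGerms n)), sg_const, sg_eq_iff]
  filter_upwards [ρ.eventuallyEq_one, hc] with x hx hx2
  rw [hx]
  simp [hx2]

end SmoothGermBasics
section SmoothGermDeriv

theorem bigO_of_mem {n : ℕ} (K : ℕ) (e : smoothGerms n) (he : e ∈ mId (iot n) ^ K) :
    ∃ f hf, e = sg f hf ∧ f =O[𝓝 0] fun x => ‖x‖ ^ K := by
  induction K generalizing e with
  | zero =>
    obtain ⟨f, hf, rfl⟩ := sg_surj e
    refine ⟨f, hf, rfl, ?_⟩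
    simpa using hf.continuous.continuousAt.norm.isBoundedUnder_le.isBigO_one ℝ
  | succ K ih =>
    rw [pow_succ] at he
    induction he using Submodule.mul_induction_on' with
    | mem_mul_mem a ha b hb =>
      obtain ⟨f, hf, rfl, hO⟩ := ih a ha
      obtain ⟨g, hg, rfl⟩ := sg_surj b
      refine ⟨_, _, sg_mul hf hg, ?_⟩
      have h0 := zero_of_mem_mId g hg hb
      have := ((hg.differentiable (by simp)) 0).isBigO_sub
      simp only [h0, sub_zero] at this
      simpa [pow_succ] using hO.mul this.norm_right
    | add a _ b _ ha hb =>
      obtain ⟨f, hf, rfl, hO⟩ := ha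
      obtain ⟨g, hg, rfl, hO2⟩ := hb
      exact ⟨_, _, sg_add hf hg, hO.add hO2⟩

theorem sg_bigO_of_mem {n : ℕ} (K : ℕ) (f : Eucl n → ℝ) (hf : ContDiff ℝ (⊤ : ℕ∞) f)
    (h : sg f hf ∈ mId (iot n) ^ K) : f =O[𝓝 0] fun x => ‖x‖ ^ K := by
  obtain ⟨g, hg, e, hO⟩ := bigO_of_mem K _ h
  exact ((sg_eq_iff hf hg).1 e).trans_isBigO hO

theorem tendsto_of_bigO {n : ℕ} (K : ℕ) (f : Eucl n → ℝ)
    (h : f =O[𝓝 0] fun x => ‖x‖ ^ (K + 1)) (v : Eucl n) :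
    Tendsto (fun t : ℝ => (t ^ K)⁻¹ * f (t • v)) (𝓝[>] 0) (𝓝 0) := by
  have h1 : Tendsto (fun t : ℝ => t • v) (𝓝[>] 0) (𝓝 0) := by
    have : Tendsto (fun t : ℝ => t • v) (𝓝 0) (𝓝 ((0 : ℝ) • v)) :=
      (continuous_id.smul continuous_const).tendsto _
    rw [zero_smul] at this
    exact this.mono_left nhdsWithin_le_nhds
  have h2 := h.comp_tendsto h1
  have h3 : (fun t : ℝ => (t ^ K)⁻¹ * f (t • v)) =O[𝓝[>] 0]
      fun t : ℝ => (t ^ K)⁻¹ * ‖t • v‖ ^ (K + 1) := (isBigO_refl _ _).mul h2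
  refine h3.trans_tendsto ?_
  have h4 : Tendsto (fun t : ℝ => t * ‖v‖ ^ (K + 1)) (𝓝[>] 0) (𝓝 0) := by
    have : Tendsto (fun t : ℝ => t * ‖v‖ ^ (K + 1)) (𝓝 0) (𝓝 (0 * ‖v‖ ^ (K + 1))) :=
      (continuous_id.mul continuous_const).tendsto _
    rw [zero_mul] at this
    exact this.mono_left nhdsWithin_le_nhds
  refine h4.congr' ?_
  filter_upwards [self_mem_nhdsWithin] with t ht
  have ht : 0 < t := ht
  rw [norm_smul, Real.norm_of_nonneg ht.le, mul_pow, pow_succ t]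
  field_simp

theorem pf_smul {n : ℕ} {p : MvPolynomial (Fin n) ℝ} {K : ℕ} (hp : p.IsHomogeneous K)
    (t : ℝ) (v : Eucl n) : pf p (t • v) = t ^ K * pf p v := by
  unfold pf
  simp only [MvPolynomial.eval_eq, PiLp.smul_apply, smul_eq_mul, mul_pow, Finset.prod_mul_distrib,
    Finset.mul_sum]
  apply Finset.sum_congr rfl
  intro d hd
  rw [Finset.prod_pow_eq_pow_sum]
  have : ∑ i ∈ d.support, d i = K := by
    exact (hp.degree_eq_sum_deg_support hd).symm
  rw [this]
  ring

theorem pf_injective {n : ℕ} {p q : MvPolynomial (Fin n) ℝ} (h : ∀ x, pf p x = pf q x) :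
    p = q := by
  apply MvPolynomial.funext
  intro x
  exact h (WithLp.toLp 2 x)

theorem pf_tendsto {n : ℕ} {p : MvPolynomial (Fin n) ℝ} {K : ℕ} (hp : p.IsHomogeneous K)
    (v : Eucl n) :
    Tendsto (fun t : ℝ => (t ^ K)⁻¹ * pf p (t • v)) (𝓝[>] 0) (𝓝 (pf p v)) := by
  refine tendsto_const_nhds.congr' ?_
  filter_upwards [self_mem_nhdsWithin] with t ht
  have ht : 0 < t := ht
  rw [pf_smul hp]
  field_simp

theorem goodAlg_smooth (n : ℕ) : GoodAlg (iot n) where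
  loc := by
    intro e he
    rw [Ideal.mem_jacobson_bot]
    intro y
    obtain ⟨f, hf, rfl⟩ := sg_surj e
    obtain ⟨g, hg, rfl⟩ := sg_surj y
    have h0 := zero_of_mem_mId f hf he
    rw [sg_mul, ← map_one (algebraMap ℝ (smoothGerms n)), sg_const, sg_add]
    apply isUnit_sg
    simp [h0]
  inj := by
    intro K p hp h
    rw [iot_eq] at h
    apply pf_injective
    intro v
    have h1 := tendsto_of_bigO K _ (sg_bigO_of_mem _ _ _ h) v
    have := tendsto_nhds_unique (pf_tendsto hp v) h1
    rw [this]
    simp [pf]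
  val := by
    intro e
    obtain ⟨f, hf, rfl⟩ := sg_surj e
    refine ⟨f 0, ?_⟩
    rw [sg_const, sg_sub]
    apply mem_mId_of_zero
    simp

theorem contDiff_partial {n : ℕ} (i : Fin n) {f : Eucl n → ℝ} (hf : ContDiff ℝ (⊤ : ℕ∞) f) :
    ContDiff ℝ (⊤ : ℕ∞) (fun x => fderiv ℝ f x (EuclideanSpace.single i 1)) :=
  (hf.fderiv_right (by simp)).clm_apply contDiff_const

/-- the germ of a partial derivative. -/
def dsg {n : ℕ} (i : Fin n) (f : Eucl n → ℝ) (hf : ContDiff ℝ (⊤ : ℕ∞) f) : smoothGerms n :=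
  sg (fun x => fderiv ℝ f x (EuclideanSpace.single i 1)) (contDiff_partial i hf)

theorem dsg_congr {n : ℕ} (i : Fin n) {f g : Eucl n → ℝ} (hf : ContDiff ℝ (⊤ : ℕ∞) f)
    (hg : ContDiff ℝ (⊤ : ℕ∞) g) (h : sg f hf = sg g hg) : dsg i f hf = dsg i g hg := by
  rw [sg_eq_iff] at h
  rw [dsg, dsg, sg_eq_iff]
  filter_upwards [h.fderiv (𝕜 := ℝ)] with x hx
  rw [hx]

theorem dsg_add {n : ℕ} (i : Fin n) {f g : Eucl n → ℝ} (hf : ContDiff ℝ (⊤ : ℕ∞) f)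
    (hg : ContDiff ℝ (⊤ : ℕ∞) g) :
    dsg i (fun x => f x + g x) (hf.add hg) = dsg i f hf + dsg i g hg := by
  rw [dsg, dsg, dsg, sg_add, sg_eq_iff]
  filter_upwards with x
  rw [fderiv_fun_add (hf.differentiable (by simp) x) (hg.differentiable (by simp) x)]
  rfl

theorem dsg_sub {n : ℕ} (i : Fin n) {f g : Eucl n → ℝ} (hf : ContDiff ℝ (⊤ : ℕ∞) f)
    (hg : ContDiff ℝ (⊤ : ℕ∞) g) :
    dsg i (fun x => f x - g x) (hf.sub hg) = dsg i f hf - dsg i g hg := by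
  rw [dsg, dsg, dsg, sg_sub, sg_eq_iff]
  filter_upwards with x
  rw [fderiv_fun_sub (hf.differentiable (by simp) x) (hg.differentiable (by simp) x)]
  rfl

theorem dsg_mul {n : ℕ} (i : Fin n) {f g : Eucl n → ℝ} (hf : ContDiff ℝ (⊤ : ℕ∞) f)
    (hg : ContDiff ℝ (⊤ : ℕ∞) g) :
    dsg i (fun x => f x * g x) (hf.mul hg) = sg f hf * dsg i g hg + sg g hg * dsg i f hf := by
  rw [dsg, dsg, dsg, sg_mul, sg_mul, sg_add, sg_eq_iff]
  filter_upwards with x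
  rw [fderiv_fun_mul (hf.differentiable (by simp) x) (hg.differentiable (by simp) x)]
  rfl

theorem dsg_mem {n : ℕ} (i : Fin n) (K : ℕ) (e : smoothGerms n) (he : e ∈ mId (iot n) ^ (K + 1)) :
    ∀ f hf, e = sg f hf → dsg i f hf ∈ mId (iot n) ^ K := by
  induction K generalizing e with
  | zero => intro f hf _; simp
  | succ K ih =>
    suffices ∃ f hf, e = sg f hf ∧ dsg i f hf ∈ mId (iot n) ^ (K + 1) by
      obtain ⟨f, hf, h1, h2⟩ := this
      intro g hg h3
      rw [dsg_congr i hg hf (h3.symm.trans h1)]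
      exact h2
    rw [pow_succ] at he
    induction he using Submodule.mul_induction_on' with
    | mem_mul_mem a ha b hb =>
      obtain ⟨f, hf, rfl⟩ := sg_surj a
      obtain ⟨g, hg, rfl⟩ := sg_surj b
      refine ⟨_, _, sg_mul hf hg, ?_⟩
      rw [dsg_mul i hf hg]
      refine Ideal.add_mem _ (Ideal.mul_mem_right _ _ ha) ?_
      rw [pow_succ']
      exact Ideal.mul_mem_mul hb (ih _ ha f hf rfl)
    | add a _ b _ ha hb =>
      obtain ⟨f, hf, rfl, hO⟩ := ha
      obtain ⟨g, hg, rfl, hO2⟩ := hb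
      refine ⟨_, _, sg_add hf hg, ?_⟩
      rw [dsg_add i hf hg]
      exact Ideal.add_mem _ hO hO2

theorem fderiv_pf {n : ℕ} (i : Fin n) (p : MvPolynomial (Fin n) ℝ) (x : Eucl n) :
    fderiv ℝ (pf p) x (EuclideanSpace.single i 1) = pf (MvPolynomial.pderiv i p) x := by
  induction p using MvPolynomial.induction_on with
  | C a =>
    have : pf (n := n) (MvPolynomial.C a) = fun _ => a := by funext x; simp [pf]
    rw [this]
    simp [pf]
  | add p q hp hq =>
    have : pf (p + q) = fun x => pf p x + pf q x := by funext x; simp [pf]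
    rw [this, fderiv_fun_add ((pf_contDiff p).differentiable (by simp) x)
      ((pf_contDiff q).differentiable (by simp) x)]
    change fderiv ℝ (pf p) x (EuclideanSpace.single i 1) +
      fderiv ℝ (pf q) x (EuclideanSpace.single i 1) = _
    rw [hp, hq]
    simp [pf]
  | mul_X p j hp =>
    have : pf (p * MvPolynomial.X j) = fun x => pf p x * x j := by funext x; simp [pf]
    have hj : fderiv ℝ (fun x : Eucl n => x j) x (EuclideanSpace.single i 1) =
        (Pi.single i (1 : ℝ) : Fin n → ℝ) j := by
      have : (fun x : Eucl n => x j) = (EuclideanSpace.proj j : Eucl n →L[ℝ] ℝ) := by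
        funext x; rfl
      rw [this, ContinuousLinearMap.fderiv]
      simp [Pi.single_apply]
    rw [this, fderiv_fun_mul ((pf_contDiff p).differentiable (by simp) x)
      ((contDiff_coord j).differentiable (by simp) x)]
    change pf p x * fderiv ℝ (fun x : Eucl n => x j) x (EuclideanSpace.single i 1) +
      x j * fderiv ℝ (pf p) x (EuclideanSpace.single i 1) = _
    rw [hp, hj, MvPolynomial.pderiv_mul, MvPolynomial.pderiv_X]
    by_cases hij : j = i
    · subst hij
      simp [pf]; ring
    · simp [pf, hij]; ring

theorem dsg_pf {n : ℕ} (i : Fin n) (p : MvPolynomial (Fin n) ℝ) :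
    dsg i (pf p) (pf_contDiff p) = iot n (MvPolynomial.pderiv i p) := by
  rw [iot_eq, dsg, sg_eq_iff]
  filter_upwards with x
  exact fderiv_pf i p x

theorem jacobianIdeal_eq {n : ℕ} (f : Eucl n → ℝ) (hf : ContDiff ℝ (⊤ : ℕ∞) f) :
    jacobianIdeal n f = Ideal.span (Set.range fun i => dsg i f hf) := by
  rw [jacobianIdeal]
  congr 1
  ext γ
  simp only [mem_ofPred_eq, mem_range]
  refine exists_congr fun i => ?_
  exact eq_comm.trans (Subtype.ext_iff (a1 := dsg i f hf) (a2 := γ)).symm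

theorem milnor_eq_initial {n m : ℕ} (hm : 1 ≤ m) (f : Eucl n → ℝ) (hf : ContDiff ℝ (⊤ : ℕ∞) f)
    (p : MvPolynomial (Fin n) ℝ) (hp : p.IsHomogeneous m) (hp0 : p ≠ 0)
    (hfp : sg f hf - iot n p ∈ mId (iot n) ^ (m + 1))
    (hfin : milnor n (pf p) < Cardinal.aleph0) : milnor n f = milnor n (pf p) := by
  have hd : ∀ i, dsg i f hf - iot n (MvPolynomial.pderiv i p) ∈ mId (iot n) ^ m := by
    intro i
    rw [iot_eq, sg_sub] at hfp
    have := dsg_mem i m _ hfp _ _ rfl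
    rwa [dsg_sub i hf (pf_contDiff p), dsg_pf] at this
  rw [milnor] at hfin
  rw [milnor, milnor]
  rw [jacobianIdeal_eq _ (pf_contDiff p)] at hfin ⊢
  rw [jacobianIdeal_eq _ hf]
  have e0 : (fun i => dsg i (pf p) (pf_contDiff p)) = fun i => iot n (MvPolynomial.pderiv i p) :=
    funext fun i => dsg_pf i p
  rw [e0] at hfin ⊢
  obtain rfl | hm2 := hm.eq_or_lt
  · have : ∃ i, MvPolynomial.pderiv i p ≠ 0 := by
      by_contra! h
      have := hp.sum_X_mul_pderiv
      simp [h] at this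
      exact hp0 this.symm
    obtain ⟨i, hi⟩ := this
    have hc : (MvPolynomial.pderiv i p).IsHomogeneous 0 := hp.pderiv
    obtain ⟨c, hc⟩ : ∃ c, MvPolynomial.pderiv i p = MvPolynomial.C c :=
      ⟨_, MvPolynomial.totalDegree_eq_zero_iff_eq_C.1 (Nat.le_zero.1 hc.totalDegree_le)⟩
    have hc0 : c ≠ 0 := by
      rintro rfl
      exact hi (by rw [hc, map_zero])
    have e1 : Ideal.span (Set.range fun i => iot n (MvPolynomial.pderiv i p)) = ⊤ := by
      refine Ideal.eq_top_of_isUnit_mem _ (x := iot n (MvPolynomial.pderiv i p))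
        (Ideal.subset_span ⟨i, rfl⟩) ?_
      rw [hc, iot_eq]
      apply isUnit_sg
      simpa [pf] using hc0
    have e2 : Ideal.span (Set.range fun i => dsg i f hf) = ⊤ := by
      refine Ideal.eq_top_of_isUnit_mem _ (x := dsg i f hf)
        (Ideal.subset_span ⟨i, rfl⟩) ?_
      apply isUnit_sg
      have := hd i
      rw [hc, iot_eq, dsg, sg_sub, pow_one] at this
      have := zero_of_mem_mId _ _ this
      simp only [pf, MvPolynomial.eval_C] at this
      intro h
      rw [h] at this
      apply hc0
      linarith
    rw [e1, e2]
  · obtain ⟨d, rfl⟩ : ∃ d, m = d + 1 := ⟨m - 1, by omega⟩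
    exact core_thm (goodAlg_smooth n) (d := d) (by omega) _ (fun i => hp.pderiv) _ hd hfin

end SmoothGermDeriv
section InitialForm

theorem tendsto_of_bigO_curve {n : ℕ} (K : ℕ) (f : Eucl n → ℝ)
    (h : f =O[𝓝 0] fun x => ‖x‖ ^ (K + 1)) (w : ℝ → Eucl n) (v : Eucl n)
    (hw : Tendsto w (𝓝[>] 0) (𝓝 v)) :
    Tendsto (fun t : ℝ => (t ^ K)⁻¹ * f (t • w t)) (𝓝[>] 0) (𝓝 0) := by
  have hid : Tendsto (fun t : ℝ => t) (𝓝[>] 0) (𝓝 0) := tendsto_id.mono_left nhdsWithin_le_nhds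
  have h1 : Tendsto (fun t : ℝ => t • w t) (𝓝[>] 0) (𝓝 0) := by
    have := hid.smul hw
    rwa [zero_smul] at this
  have h2 := h.comp_tendsto h1
  have h3 : (fun t : ℝ => (t ^ K)⁻¹ * f (t • w t)) =O[𝓝[>] 0]
      fun t : ℝ => (t ^ K)⁻¹ * ‖t • w t‖ ^ (K + 1) := (isBigO_refl _ _).mul h2
  refine h3.trans_tendsto ?_
  have h4 : Tendsto (fun t : ℝ => t * ‖w t‖ ^ (K + 1)) (𝓝[>] 0) (𝓝 0) := by
    have := hid.mul (hw.norm.pow (K + 1))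
    rwa [zero_mul] at this
  refine h4.congr' ?_
  filter_upwards [self_mem_nhdsWithin] with t ht
  have ht : 0 < t := ht
  rw [norm_smul, Real.norm_of_nonneg ht.le, mul_pow, pow_succ t]
  field_simp

theorem tendsto_curve {n : ℕ} (K : ℕ) (f : Eucl n → ℝ) (hf : ContDiff ℝ (⊤ : ℕ∞) f)
    (p : MvPolynomial (Fin n) ℝ) (hp : p.IsHomogeneous K)
    (hfp : sg f hf - iot n p ∈ mId (iot n) ^ (K + 1)) (w : ℝ → Eucl n) (v : Eucl n)
    (hw : Tendsto w (𝓝[>] 0) (𝓝 v)) :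
    Tendsto (fun t : ℝ => (t ^ K)⁻¹ * f (t • w t)) (𝓝[>] 0) (𝓝 (pf p v)) := by
  rw [iot_eq, sg_sub] at hfp
  have h1 := tendsto_of_bigO_curve K _ (sg_bigO_of_mem _ _ _ hfp) w v hw
  have h2 : Tendsto (fun t => pf p (w t)) (𝓝[>] 0) (𝓝 (pf p v)) :=
    ((pf_contDiff p).continuous.tendsto v).comp hw
  have h3 := h1.add h2
  rw [zero_add] at h3
  refine h3.congr' ?_
  filter_upwards [self_mem_nhdsWithin] with t ht
  have ht : 0 < t := ht
  rw [pf_smul hp]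
  field_simp
  ring

theorem exists_initial {n m : ℕ} (f : Eucl n → ℝ) (hf : ContDiff ℝ (⊤ : ℕ∞) f) (l : Eucl n → ℝ)
    (h : ∀ v, Tendsto (fun t : ℝ => (t ^ m)⁻¹ * f (t • v)) (𝓝[>] 0) (𝓝 (l v))) :
    ∃ p : MvPolynomial (Fin n) ℝ, p.IsHomogeneous m ∧ sg f hf - iot n p ∈ mId (iot n) ^ (m + 1) ∧
      ∀ v, pf p v = l v := by
  have key : ∀ k ≤ m, sg f hf ∈ mId (iot n) ^ k := by
    intro k
    induction k with
    | zero => intro _; simp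
    | succ k ih =>
      intro hk
      obtain ⟨p, hp, hfp⟩ := expand (goodAlg_smooth n) k _ (ih (by omega))
      have hp0 : p = 0 := by
        apply pf_injective
        intro v
        have h1 := tendsto_curve k f hf p hp hfp (fun _ => v) v tendsto_const_nhds
        have hid : Tendsto (fun t : ℝ => t ^ (m - k)) (𝓝[>] 0) (𝓝 0) := by
          have : Tendsto (fun t : ℝ => t ^ (m - k)) (𝓝 0) (𝓝 (0 ^ (m - k))) :=
            (continuous_pow (m - k)).tendsto _
          rw [zero_pow (by omega)] at this
          exact this.mono_left nhdsWithin_le_nhds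
        have h2 := hid.mul (h v)
        rw [zero_mul] at h2
        have h3 : Tendsto (fun t : ℝ => (t ^ k)⁻¹ * f (t • v)) (𝓝[>] 0) (𝓝 0) := by
          refine h2.congr' ?_
          filter_upwards [self_mem_nhdsWithin] with t ht
          have ht : 0 < t := ht
          have : t ^ m = t ^ (m - k) * t ^ k := by rw [← pow_add]; congr 1; omega
          rw [this]
          field_simp
        rw [tendsto_nhds_unique h1 h3]
        simp [pf]
      simpa [hp0] using hfp
  obtain ⟨p, hp, hfp⟩ := expand (goodAlg_smooth n) m _ (key m le_rfl)
  refine ⟨p, hp, hfp, fun v => ?_⟩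
  exact tendsto_nhds_unique (tendsto_curve m f hf p hp hfp (fun _ => v) v tendsto_const_nhds) (h v)

theorem iteratedDeriv_of_tendsto (u : ℝ → ℝ) (hu : ContDiff ℝ (⊤ : ℕ∞) u) (m : ℕ) :
    ∀ c : ℝ, Tendsto (fun t : ℝ => (t ^ m)⁻¹ * u t) (𝓝[>] 0) (𝓝 c) →
      iteratedDeriv m u 0 = m.factorial * c := by
  induction m using Nat.strong_induction_on with
  | _ m ih =>
    intro c hc
    have hlow : ∀ k < m, iteratedDeriv k u 0 = 0 := by
      intro k hk
      have hid : Tendsto (fun t : ℝ => t ^ (m - k)) (𝓝[>] 0) (𝓝 0) := by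
        have : Tendsto (fun t : ℝ => t ^ (m - k)) (𝓝 0) (𝓝 (0 ^ (m - k))) :=
          (continuous_pow (m - k)).tendsto _
        rw [zero_pow (by omega)] at this
        exact this.mono_left nhdsWithin_le_nhds
      have h2 := hid.mul hc
      rw [zero_mul] at h2
      rw [ih k hk 0, mul_zero]
      refine h2.congr' ?_
      filter_upwards [self_mem_nhdsWithin] with t ht
      have ht : 0 < t := ht
      have : t ^ m = t ^ (m - k) * t ^ k := by rw [← pow_add]; congr 1; omega
      rw [this]
      field_simp
    have hT := taylor_isLittleO_univ (f := u) (x₀ := 0) (n := m) (hu.of_le (by exact_mod_cast le_top))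
    have hT2 : (fun t : ℝ => u t - (m.factorial : ℝ)⁻¹ * t ^ m * iteratedDeriv m u 0)
        =o[𝓝[>] 0] fun t : ℝ => t ^ m := by
      refine (hT.mono nhdsWithin_le_nhds).congr ?_ (by simp)
      intro t
      rw [taylor_within_apply, Finset.sum_range_succ, Finset.sum_eq_zero]
      · simp [iteratedDerivWithin_univ]
      · intro k hk
        rw [iteratedDerivWithin_univ, hlow k (Finset.mem_range.1 hk), smul_zero]
    have h3 := hT2.tendsto_div_nhds_zero
    have h4 : Tendsto (fun t : ℝ => (t ^ m)⁻¹ * u t) (𝓝[>] 0)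
        (𝓝 (0 + (m.factorial : ℝ)⁻¹ * iteratedDeriv m u 0)) := by
      refine (h3.add_const _).congr' ?_
      filter_upwards [self_mem_nhdsWithin] with t ht
      have ht : 0 < t := ht
      field_simp
      ring
    have h5 := tendsto_nhds_unique hc h4
    have : (m.factorial : ℝ) ≠ 0 := by exact_mod_cast m.factorial_ne_zero
    rw [h5, zero_add]
    field_simp

theorem inPart_eq {n m : ℕ} (f : Eucl n → ℝ) (hf : ContDiff ℝ (⊤ : ℕ∞) f) (l : Eucl n → ℝ)
    (h : ∀ v, Tendsto (fun t : ℝ => (t ^ m)⁻¹ * f (t • v)) (𝓝[>] 0) (𝓝 (l v))) :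
    inPart f m = l := by
  funext v
  have hu : ContDiff ℝ (⊤ : ℕ∞) (fun t : ℝ => f (t • v)) :=
    hf.comp (contDiff_id.smul contDiff_const)
  have h1 := iteratedDeriv_of_tendsto _ hu m (l v) (h v)
  have h2 : iteratedDeriv m (fun t : ℝ => f (t • v)) 0 = iteratedFDeriv ℝ m f 0 (fun _ => v) := by
    have e : (fun t : ℝ => f (t • v)) = f ∘ (ContinuousLinearMap.toSpanSingleton ℝ v) := by
      funext t; simp
    rw [iteratedDeriv_eq_iteratedFDeriv, e,
      ContinuousLinearMap.iteratedFDeriv_comp_right _ hf _ (by exact_mod_cast le_top)]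
    simp
  rw [inPart, ← h2, h1, smul_eq_mul]
  have : (m.factorial : ℝ) ≠ 0 := by exact_mod_cast m.factorial_ne_zero
  field_simp

/-- pullback of smooth germs by a linear isomorphism. -/
def pull {n : ℕ} (A : Eucl n ≃L[ℝ] Eucl n) : smoothGerms n →ₐ[ℝ] smoothGerms n where
  toFun e := ⟨(e : Filter.Germ (𝓝 (0 : Eucl n)) ℝ).compTendsto A
      (by simpa using A.continuous.tendsto 0), by
    obtain ⟨f, hf, rfl⟩ := sg_surj e
    exact ⟨f ∘ A, hf.comp A.contDiff, rfl⟩⟩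
  map_one' := rfl
  map_zero' := rfl
  map_mul' x y := by
    obtain ⟨f, hf, rfl⟩ := sg_surj x
    obtain ⟨g, hg, rfl⟩ := sg_surj y
    rfl
  map_add' x y := by
    obtain ⟨f, hf, rfl⟩ := sg_surj x
    obtain ⟨g, hg, rfl⟩ := sg_surj y
    rfl
  commutes' c := by
    rw [sg_const]
    rfl

theorem pull_sg {n : ℕ} (A : Eucl n ≃L[ℝ] Eucl n) (f : Eucl n → ℝ) (hf : ContDiff ℝ (⊤ : ℕ∞) f) :
    pull A (sg f hf) = sg (f ∘ A) (hf.comp A.contDiff) := rfl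

theorem pull_surjective {n : ℕ} (A : Eucl n ≃L[ℝ] Eucl n) : Function.Surjective (pull A) := by
  intro e
  obtain ⟨f, hf, rfl⟩ := sg_surj e
  refine ⟨sg (f ∘ A.symm) (hf.comp A.symm.contDiff), ?_⟩
  rw [pull_sg, sg_eq_iff]
  filter_upwards with x
  simp

theorem milnor_comp_le {n : ℕ} (A : Eucl n ≃L[ℝ] Eucl n) (f : Eucl n → ℝ)
    (hf : ContDiff ℝ (⊤ : ℕ∞) f) : milnor n f ≤ milnor n (f ∘ A) := by
  have hfA : ContDiff ℝ (⊤ : ℕ∞) (f ∘ A) := hf.comp A.contDiff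
  have hle : jacobianIdeal n (f ∘ A) ≤ (jacobianIdeal n f).comap (pull A.symm) := by
    rw [jacobianIdeal_eq _ hfA, jacobianIdeal_eq _ hf, Ideal.span_le]
    rintro _ ⟨i, rfl⟩
    change pull A.symm (dsg i (f ∘ A) hfA) ∈ Ideal.span (Set.range fun i => dsg i f hf)
    have : pull A.symm (dsg i (f ∘ A) hfA) =
        ∑ j, algebraMap ℝ _ (A (EuclideanSpace.single i 1) j) * dsg j f hf := by
      simp_rw [dsg, sg_const, sg_mul]
      rw [sg_sum, pull_sg, sg_eq_iff]
      filter_upwards with x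
      have hx : fderiv ℝ (f ∘ A) (A.symm x) = (fderiv ℝ f x).comp (A : Eucl n →L[ℝ] Eucl n) := by
        rw [A.comp_right_fderiv, A.apply_symm_apply]
      have hv := (EuclideanSpace.basisFun (Fin n) ℝ).sum_repr (A (EuclideanSpace.single i 1))
      have := congrArg (fderiv ℝ f x) hv
      simp only [Function.comp_apply, hx, ContinuousLinearMap.comp_apply]
      change fderiv ℝ f x (A (EuclideanSpace.single i 1)) = _
      rw [← this, map_sum]
      simp
    rw [this]
    exact Ideal.sum_mem _ fun j _ => Ideal.mul_mem_left _ _ (Ideal.subset_span ⟨j, rfl⟩)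
  have hs := Ideal.quotientMap_surjective (H := hle) (pull_surjective A.symm)
  exact LinearMap.rank_le_of_surjective
    (Ideal.quotientMapₐ (jacobianIdeal n f) (pull A.symm) hle).toLinearMap hs

theorem milnor_comp {n : ℕ} (A : Eucl n ≃L[ℝ] Eucl n) (f : Eucl n → ℝ)
    (hf : ContDiff ℝ (⊤ : ℕ∞) f) : milnor n (f ∘ A) = milnor n f := by
  apply le_antisymm _ (milnor_comp_le A f hf)
  have := milnor_comp_le A.symm (f ∘ A) (hf.comp A.contDiff)
  have e : (f ∘ A) ∘ A.symm = f := by funext x; simp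
  rwa [e] at this

theorem diffeo_deriv {n : ℕ} (φ : Eucl n → Eucl n) (h : IsCkDiffeoGermAt 1 φ) :
    ∃ A : Eucl n ≃L[ℝ] Eucl n, HasFDerivAt φ (A : Eucl n →L[ℝ] Eucl n) 0 := by
  obtain ⟨h0, U, V, hU, hV, h0U, h0V, -, hφ, ψ, hψ, hl, hr⟩ := h
  have dφ : DifferentiableAt ℝ φ 0 :=
    (hφ.contDiffAt (hU.mem_nhds h0U)).differentiableAt (by simp)
  have dψ : DifferentiableAt ℝ ψ 0 :=
    (hψ.contDiffAt (hV.mem_nhds h0V)).differentiableAt (by simp)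
  have hψ0 : ψ 0 = 0 := by simpa [h0] using hl 0 h0U
  have e1 : (fderiv ℝ ψ 0).comp (fderiv ℝ φ 0) = ContinuousLinearMap.id ℝ _ := by
    have c : HasFDerivAt (ψ ∘ φ) ((fderiv ℝ ψ 0).comp (fderiv ℝ φ 0)) 0 := by
      apply HasFDerivAt.comp
      · rw [h0]; exact dψ.hasFDerivAt
      · exact dφ.hasFDerivAt
    have : (ψ ∘ φ) =ᶠ[𝓝 0] id := by
      filter_upwards [hU.mem_nhds h0U] with x hx using hl x hx
    exact (c.congr_of_eventuallyEq this.symm).unique (hasFDerivAt_id 0)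
  have e2 : (fderiv ℝ φ 0).comp (fderiv ℝ ψ 0) = ContinuousLinearMap.id ℝ _ := by
    have c : HasFDerivAt (φ ∘ ψ) ((fderiv ℝ φ 0).comp (fderiv ℝ ψ 0)) 0 := by
      apply HasFDerivAt.comp
      · rw [hψ0]; exact dφ.hasFDerivAt
      · exact dψ.hasFDerivAt
    have : (φ ∘ ψ) =ᶠ[𝓝 0] id := by
      filter_upwards [hV.mem_nhds h0V] with x hx using hr x hx
    exact (c.congr_of_eventuallyEq this.symm).unique (hasFDerivAt_id 0)
  refine ⟨ContinuousLinearEquiv.equivOfInverse (fderiv ℝ φ 0) (fderiv ℝ ψ 0)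
    (fun x => DFunLike.congr_fun e1 x) (fun x => DFunLike.congr_fun e2 x), ?_⟩
  exact dφ.hasFDerivAt

theorem milnor_of_diffeo {n m : ℕ} (hm : 1 ≤ m) (f g : Eucl n → ℝ) (hf : ContDiff ℝ (⊤ : ℕ∞) f)
    (hg : ContDiff ℝ (⊤ : ℕ∞) g) (p : MvPolynomial (Fin n) ℝ) (hp : p.IsHomogeneous m)
    (hp0 : p ≠ 0) (hfp : sg f hf - iot n p ∈ mId (iot n) ^ (m + 1))
    (hfin : milnor n (pf p) < Cardinal.aleph0) (φ : Eucl n → Eucl n) (hφ : IsCkDiffeoGermAt 1 φ)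
    (hgf : ∀ᶠ x in 𝓝 (0 : Eucl n), g x = f (φ x)) : milnor n g = milnor n (pf p) := by
  obtain ⟨A, hA⟩ := diffeo_deriv φ hφ
  have hgA : ContDiff ℝ (⊤ : ℕ∞) (g ∘ A.symm) := hg.comp A.symm.contDiff
  have key : ∀ v, Tendsto (fun t : ℝ => (t ^ m)⁻¹ * (g ∘ A.symm) (t • v)) (𝓝[>] 0)
      (𝓝 (pf p v)) := by
    intro v
    have hd : HasDerivAt (fun t : ℝ => φ (t • A.symm v)) v 0 := by
      have h1 : HasDerivAt (fun t : ℝ => t • A.symm v) (A.symm v) 0 := by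
        simpa using (hasDerivAt_id (0 : ℝ)).smul_const (A.symm v)
      have h2 : HasFDerivAt φ (A : Eucl n →L[ℝ] Eucl n) ((0 : ℝ) • A.symm v) := by
        rwa [zero_smul]
      have h3 := h2.comp_hasDerivAt (0 : ℝ) h1
      have e : (A : Eucl n →L[ℝ] Eucl n) (A.symm v) = v := A.apply_symm_apply v
      rw [e] at h3
      exact h3
    have hw : Tendsto (fun t : ℝ => t⁻¹ • φ (t • A.symm v)) (𝓝[>] 0) (𝓝 v) := by
      have := hd.tendsto_slope_zero_right
      simpa [hφ.1] using this
    have h3 := tendsto_curve m f hf p hp hfp _ v hw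
    refine h3.congr' ?_
    have h4 : Tendsto (fun t : ℝ => t • A.symm v) (𝓝[>] 0) (𝓝 0) := by
      have : Tendsto (fun t : ℝ => t • A.symm v) (𝓝 0) (𝓝 ((0 : ℝ) • A.symm v)) :=
        (continuous_id.smul continuous_const).tendsto _
      rw [zero_smul] at this
      exact this.mono_left nhdsWithin_le_nhds
    filter_upwards [self_mem_nhdsWithin, h4.eventually hgf] with t ht ht2
    have ht : 0 < t := ht
    rw [Function.comp_apply, map_smul, ht2, smul_inv_smul₀ ht.ne']
  obtain ⟨q, hq, hgq, hqp⟩ := exists_initial _ hgA _ key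
  have : q = p := pf_injective hqp
  subst this
  rw [← milnor_comp A.symm g hg]
  exact milnor_eq_initial hm _ hgA q hq hp0 hgq hfin

end InitialForm

/-- if `{f_t}` is an `R`-`C^1` trivial family of `C^∞` germs
`(ℝ^n, 0) → (ℝ, 0)` and `f_0` has finite order with `μ(in(f_0)) < ∞`, then
`μ(f_t) = μ(f_0)` for all `t ∈ [0, 1]`. -/
theorem milnor_constant_of_C1_trivial {n : ℕ} (f : ℝ → Eucl n → ℝ)
    (hsm : ∀ t ∈ Icc (0 : ℝ) 1, ContDiff ℝ (⊤ : ℕ∞) (f t))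
    (h0 : ∀ t ∈ Icc (0 : ℝ) 1, f t 0 = 0)
    (htriv : ∀ t ∈ Icc (0 : ℝ) 1, ∃ φ : Eucl n → Eucl n, IsCkDiffeoGermAt 1 φ ∧
      ∀ᶠ x in 𝓝 (0 : Eucl n), f t x = f 0 (φ x))
    (m : ℕ) (hord : HasOrderAt (f 0) 0 (m : ℝ))
    (hiso : milnor n (inPart (f 0) m) < Cardinal.aleph0) :
    ∀ t ∈ Icc (0 : ℝ) 1, milnor n (f t) = milnor n (f 0) := by
  have z0 : (0 : ℝ) ∈ Icc (0 : ℝ) 1 := ⟨le_rfl, zero_le_one⟩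
  have hf := hsm 0 z0
  have hf0 := h0 0 z0
  obtain ⟨hlim, v₀, -, L₀, hL₀, hv₀⟩ := hord
  simp only [Real.rpow_natCast, zero_add, smul_eq_mul] at hlim hv₀
  have hlim2 : ∀ v : Eucl n, ∃ L : ℝ,
      Tendsto (fun t : ℝ => (t ^ m)⁻¹ * f 0 (t • v)) (𝓝[>] 0) (𝓝 L) := by
    intro v
    by_cases hv : v = 0
    · refine ⟨0, ?_⟩
      subst hv
      simp [hf0]
    · exact hlim v hv
  choose l hl using hlim2
  have hm : 1 ≤ m := by
    by_contra hm
    obtain rfl : m = 0 := by omega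
    apply hL₀
    simp only [pow_zero, inv_one, one_mul] at hv₀
    refine tendsto_nhds_unique hv₀ ?_
    have : Tendsto (fun t : ℝ => f 0 (t • v₀)) (𝓝 0) (𝓝 (f 0 ((0 : ℝ) • v₀))) :=
      (hf.continuous.comp (continuous_id.smul continuous_const)).tendsto _
    rw [zero_smul, hf0] at this
    exact this.mono_left nhdsWithin_le_nhds
  obtain ⟨p, hp, hfp, hpl⟩ := exists_initial (f 0) hf l hl
  have hin : inPart (f 0) m = pf p := by
    rw [inPart_eq (f 0) hf l hl]
    exact (funext hpl).symm
  rw [hin] at hiso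
  have hp0 : p ≠ 0 := by
    rintro rfl
    apply hL₀
    rw [tendsto_nhds_unique hv₀ (hl v₀), ← hpl]
    simp [pf]
  intro t ht
  obtain ⟨φ, hφ, hfφ⟩ := htriv t ht
  rw [milnor_of_diffeo hm (f 0) (f t) hf (hsm t ht) p hp hp0 hfp hiso φ hφ hfφ,
    milnor_eq_initial hm (f 0) hf p hp hp0 hfp hiso]
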